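/- Let (X, μ) be a standard Borel probability space and let T be an invertible measure-preserving transformation of (X, μ). For a semimetric ρ and n ≥ 1 put ρ_n^{av}(x,y) = (1/n) Σ_{k=0}^{n-1} ρ(T^k x, T^k y). Then the following are equivalent: (1) T has purely discrete spectrum, i.e., the eigenfunctions of the Koopman operator U_T f = f ∘ T on L²(X, μ) span a dense subspace of L²(X, μ); (2) for every admissible summable semimetric ρ and every ε>0, the ε-entropies H_ε(ρ_n^{av}, μ), n = 1, 2, …, are uniformly bounded; (3) for some admissible summable metric ρ and every ε>0, the ε-entropies H_ε(ρ_n^{av}, μ), n = 1, 2, …, are uniformly bounded. -/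

import Mathlib

open MeasureTheory Filter Function Set
open scoped ENNReal

/-- A semimetric on `X`: a nonnegative function vanishing on the diagonal, symmetric and
satisfying the triangle inequality for all points. -/
def IsSemimetric {X : Type*} (ρ : X → X → ℝ) : Prop :=
  (∀ x y, 0 ≤ ρ x y) ∧ (∀ x, ρ x x = 0) ∧ (∀ x y, ρ x y = ρ y x) ∧
    ∀ x y z, ρ x z ≤ ρ x y + ρ y z

/-- A metric on `X`: a semimetric that separates points. -/
def IsMetricFun {X : Type*} (ρ : X → X → ℝ) : Prop :=
  IsSemimetric ρ ∧ ∀ x y, ρ x y = 0 ↔ x = y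

/-- The semimetric space `(S, ρ)` is separable. -/
def SeparableOn {X : Type*} (ρ : X → X → ℝ) (S : Set X) : Prop :=
  ∃ D : Set X, D ⊆ S ∧ D.Countable ∧ ∀ x ∈ S, ∀ ε : ℝ, 0 < ε → ∃ y ∈ D, ρ x y < ε

/-- A semimetric is admissible for `(X, μ)` if it is measurable on `(X × X, μ × μ)` and
separable on a subset of full measure. -/
def Admissible {X : Type*} [MeasurableSpace X] (μ : Measure X) (ρ : X → X → ℝ) : Prop :=
  Measurable (Function.uncurry ρ) ∧
    ∃ S : Set X, MeasurableSet S ∧ μ Sᶜ = 0 ∧ SeparableOn ρ S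

/-- An `ε`-cover of size `k`: `X = X₀ ∪ X₁ ∪ ⋯ ∪ X_k` with `μ(X₀) < ε` and
`diam_ρ(X_j) < ε` for `j = 1, …, k`. -/
def IsEpsCover {X : Type*} [MeasurableSpace X] (μ : Measure X) (ρ : X → X → ℝ)
    (ε : ℝ) (k : ℕ) : Prop :=
  ∃ A : Fin (k + 1) → Set X, (∀ i, MeasurableSet (A i)) ∧ (⋃ i, A i) = Set.univ ∧
    μ (A 0) < ENNReal.ofReal ε ∧
    ∀ i, i ≠ 0 → ∀ x ∈ A i, ∀ y ∈ A i, ρ x y < ε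

/-- The `ε`-entropy of `(X, μ, ρ)`: the binary logarithm of the smallest size of an
`ε`-cover, and `∞` if there is no finite `ε`-cover. -/
noncomputable def epsEntropy {X : Type*} [MeasurableSpace X] (μ : Measure X)
    (ρ : X → X → ℝ) (ε : ℝ) : ℝ≥0∞ :=
  sInf {h : ℝ≥0∞ | ∃ k : ℕ, IsEpsCover μ ρ ε k ∧ h = ENNReal.ofReal (Real.logb 2 k)}

/-- The m-norm of `f`: the infimum of the `L¹`-norms of measurable semimetrics
dominating `|f|` almost everywhere (`∞` if there is no such semimetric). -/
noncomputable def mnorm {X : Type*} [MeasurableSpace X] (μ : Measure X)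
    (f : X → X → ℝ) : ℝ≥0∞ :=
  sInf {c : ℝ≥0∞ | ∃ ρ : X → X → ℝ, IsSemimetric ρ ∧ Measurable (Function.uncurry ρ) ∧
    (∀ᵐ p ∂(μ.prod μ), |f p.1 p.2| ≤ ρ p.1 p.2) ∧
    c = ∫⁻ p, ENNReal.ofReal (ρ p.1 p.2) ∂(μ.prod μ)}

/-- The m-distance between two functions. -/
noncomputable def mdist {X : Type*} [MeasurableSpace X] (μ : Measure X)
    (f g : X → X → ℝ) : ℝ≥0∞ :=
  mnorm μ fun x y => f x y - g x y

/-- The `L¹(X × X, μ × μ)` distance between two functions. -/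
noncomputable def L1dist {X : Type*} [MeasurableSpace X] (μ : Measure X)
    (f g : X → X → ℝ) : ℝ≥0∞ :=
  ∫⁻ p, ENNReal.ofReal |f p.1 p.2 - g p.1 p.2| ∂(μ.prod μ)

/-!
All three conditions say that every vector of `L²` has a totally bounded orbit under the Koopman
operator `U`, that is, is almost periodic.

Eigenvectors are almost periodic, and the almost periodic vectors form a closed subspace.
Conversely, let `f ≠ 0` be orthogonal to all eigenvectors and almost periodic. The operators
`|Uⁿ f⟩⟨Uⁿ f|` have a compact closed convex hull which misses zero, and the averages over `n`
cluster at a point of it that commutes with `U`: a nonzero compact self-adjoint operator, whose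
eigenspaces are finite dimensional and `U`-invariant and so contain eigenvectors of `U`.

If every vector is almost periodic, bound an admissible summable `ρ (x, y)` by
`r x + r y + |f x - f y|` with `f` simple and `r` small in mean; a finite net of the orbit of `f`
produces covers for the averages of `ρ` whose size does not depend on `n`.

If the entropies of the averages of a metric `ρ` are bounded, then by the pigeonhole principle, for
a `ρ`-Lipschitz function, any `n` successive times contain a fixed proportion of times at which the
translates are mutually close in `L²`. Shifting such a cluster by times whose translates are
separated gives disjoint sets of times, so only boundedly many translates can be separated. The sets
where Lipschitz functions are positive form a `π`-system generating the `σ`-algebra up to null sets,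
so every vector of `L²` is almost periodic.
-/

section RankOneHull

variable {H : Type*} [NormedAddCommGroup H] [InnerProductSpace ℂ H] {s : Set H} {A : H →L[ℂ] H}

/-- The closed convex hull, in the operator norm, of the rank-one operators `|v⟩⟨v|` with `v ∈ s`.
It is the set of all mixtures of these operators, where limits of orbit averages are sought. -/
noncomputable def rankOneHull (s : Set H) : Set (H →L[ℂ] H) :=
  closedConvexHull ℝ ((fun v => InnerProductSpace.rankOne ℂ v v) '' s)

lemma rankOneHull_subset {t : Set (H →L[ℂ] H)} (hs : ∀ v ∈ s, InnerProductSpace.rankOne ℂ v v ∈ t)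
    (hconv : Convex ℝ t) (hclosed : IsClosed t) : rankOneHull s ⊆ t :=
  closedConvexHull_min (image_subset_iff.mpr hs) hconv hclosed

lemma isSymmetric_of_mem_rankOneHull (hA : A ∈ rankOneHull s) :
    (A : H →ₗ[ℂ] H).IsSymmetric := by
  refine rankOneHull_subset (t := {A : H →L[ℂ] H | (A : H →ₗ[ℂ] H).IsSymmetric})
    (fun v _ => InnerProductSpace.isSymmetric_rankOne_self v) ?_ ?_ hA
  · intro A hA B hB a b _ _ _ x y
    have hA := hA x y
    have hB := hB x y
    simp only [ContinuousLinearMap.coe_coe] at hA hB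
    simp [inner_add_left, inner_add_right, inner_smul_left_eq_smul, inner_smul_right_eq_smul,
      hA, hB]
  · simp only [LinearMap.IsSymmetric, ContinuousLinearMap.coe_coe, ofPred_forall]
    exact isClosed_iInter fun x => isClosed_iInter fun y =>
      isClosed_eq (by fun_prop) (by fun_prop)

lemma isCompactOperator_of_mem_rankOneHull [CompleteSpace H] (hA : A ∈ rankOneHull s) :
    IsCompactOperator A := by
  refine rankOneHull_subset (t := {A | IsCompactOperator A}) (fun v _ => ?_)
    ((compactOperator (RingHom.id ℂ) H H).restrictScalars ℝ).convex
    isClosed_setOfPred_isCompactOperator hA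
  simp only [mem_ofPred_eq, InnerProductSpace.rankOne_def']
  exact (isCompactOperator_of_locallyCompactSpace_rng
    (ContinuousLinearMap.toSpanSingleton ℂ v)).comp_clm (innerSL ℂ v)

lemma apply_mem_of_mem_rankOneHull {K : Submodule ℂ H} (hK : IsClosed (K : Set H))
    (hs : s ⊆ K) (hA : A ∈ rankOneHull s) (x : H) : A x ∈ K := by
  refine rankOneHull_subset (t := {A | A x ∈ K}) (fun v hv => K.smul_mem _ (hs hv)) ?_ ?_ hA
  · exact ((K.restrictScalars ℝ).comap
      ((ContinuousLinearMap.apply ℂ H x).restrictScalars ℝ).toLinearMap).convex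
  · exact hK.preimage (ContinuousLinearMap.apply ℂ H x).continuous

lemma sq_div_two_le_norm_inner {u v : H} {r : ℝ} (hr : 0 < r) (hu : r ≤ ‖u‖)
    (huv : dist u v ≤ r / 2) : r ^ 2 / 2 ≤ ‖inner ℂ u v‖ := by
  have hdiff : ‖inner ℂ u (u - v)‖ ≤ ‖u‖ * (r / 2) :=
    (norm_inner_le_norm _ _).trans (by rw [← dist_eq_norm]; gcongr)
  have hself : ‖inner ℂ u u‖ = ‖u‖ ^ 2 := by simp [inner_self_eq_norm_sq_to_K]
  have htri := norm_sub_norm_le (inner ℂ u u) (inner ℂ u (u - v))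
  rw [← inner_sub_right, sub_sub_cancel, hself] at htri
  nlinarith

/-- A finite net of `s` detects every mixture: the sum of the quadratic forms at the points of the
net is bounded below on each rank-one operator, hence on the hull. -/
lemma zero_notMem_rankOneHull (hs : TotallyBounded s) {r : ℝ} (hr : 0 < r)
    (hrs : ∀ v ∈ s, r ≤ ‖v‖) : (0 : H →L[ℂ] H) ∉ rankOneHull s := by
  obtain ⟨t, ht, hcover⟩ := Metric.totallyBounded_iff.mp hs (r / 2) (by positivity)
  let ℓ : (H →L[ℂ] H) →L[ℝ] ℝ := ∑ v ∈ ht.toFinset, Complex.reCLM ∘L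
    ((innerSL ℂ v).restrictScalars ℝ) ∘L (ContinuousLinearMap.apply ℂ H v).restrictScalars ℝ
  have hℓ (A) : ℓ A = ∑ v ∈ ht.toFinset, (inner ℂ v (A v)).re := by simp [ℓ]
  intro h0
  have hle : (r ^ 2 / 2) ^ 2 ≤ ℓ 0 := by
    refine rankOneHull_subset (t := {A | (r ^ 2 / 2) ^ 2 ≤ ℓ A}) (fun u hu => ?_)
      (convex_halfSpace_ge ℓ.isLinear _) (isClosed_le continuous_const ℓ.continuous) h0
    obtain ⟨v, hv, huv⟩ := mem_iUnion₂.mp (hcover hu)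
    have hform (w : H) : (inner ℂ w (InnerProductSpace.rankOne ℂ u u w)).re
        = ‖inner ℂ u w‖ ^ 2 := by
      rw [InnerProductSpace.rankOne_apply, inner_smul_right, ← inner_conj_symm w u,
        Complex.mul_conj', ← Complex.ofReal_pow, Complex.ofReal_re]
    simp only [mem_ofPred_eq, hℓ, hform]
    refine le_trans ?_ (Finset.single_le_sum (f := fun w => ‖inner ℂ u w‖ ^ 2)
      (fun _ _ => by positivity) (ht.mem_toFinset.mpr hv))
    gcongr
    exact sq_div_two_le_norm_inner hr (hrs u hu) (Metric.mem_ball.mp huv).le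
  rw [map_zero] at hle
  exact absurd hle (not_le.mpr (by positivity))

lemma isCompact_rankOneHull [CompleteSpace H] (hs : TotallyBounded s) :
    IsCompact (rankOneHull s) := by
  have hcont : Continuous fun v : H => InnerProductSpace.rankOne ℂ v v :=
    (ContinuousLinearMap.smulRightL ℂ H H).continuous₂.comp
      ((innerSL ℂ (E := H)).continuous.prodMk continuous_id)
  have himage : TotallyBounded ((fun v => InnerProductSpace.rankOne ℂ v v) '' s) :=
    ((hs.closure.isCompact_of_isClosed isClosed_closure).image hcont).totallyBounded.subset
      (image_mono subset_closure)
  rw [rankOneHull, closedConvexHull_eq_closure_convexHull]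
  exact himage.convexHull.closure.isCompact_of_isClosed isClosed_closure

lemma birkhoffAverage_rankOne_mem_rankOneHull (U : H →ₗᵢ[ℂ] H) (f : H) (n : ℕ) :
    birkhoffAverage ℝ U (fun v => InnerProductSpace.rankOne ℂ v v) (n + 1) f
      ∈ rankOneHull (range fun k => U^[k] f) := by
  rw [birkhoffAverage, birkhoffSum, Finset.smul_sum]
  refine convex_closedConvexHull.sum_mem (fun _ _ => by positivity) ?_ fun k _ =>
    subset_closedConvexHull ⟨_, ⟨k, rfl⟩, rfl⟩
  rw [Finset.sum_const, Finset.card_range, nsmul_eq_mul, mul_inv_cancel₀ (by positivity)]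

lemma birkhoffAverage_rankOne_mul (U : H →ₗᵢ[ℂ] H) (f : H) (n : ℕ) :
    birkhoffAverage ℝ U (fun v => InnerProductSpace.rankOne ℂ v v) n (U f)
        * U.toContinuousLinearMap
      = U.toContinuousLinearMap
        * birkhoffAverage ℝ U (fun v => InnerProductSpace.rankOne ℂ v v) n f := by
  have hrank (v : H) : InnerProductSpace.rankOne ℂ (U v) (U v) * U.toContinuousLinearMap
      = U.toContinuousLinearMap * InnerProductSpace.rankOne ℂ v v := by
    ext x
    simp [U.inner_map_map]
  simp only [birkhoffAverage, birkhoffSum, smul_mul_assoc, mul_smul_comm, Finset.sum_mul,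
    Finset.mul_sum, ← hrank, ← iterate_succ_apply, ← iterate_succ_apply']

lemma exists_mem_rankOneHull_commute [CompleteSpace H] (U : H →ₗᵢ[ℂ] H) {f : H}
    (hf : TotallyBounded (range fun n => U^[n] f)) :
    ∃ S ∈ rankOneHull (range fun n => U^[n] f), Commute S U.toContinuousLinearMap := by
  let avg (n : ℕ) (g : H) := birkhoffAverage ℝ U (fun v => InnerProductSpace.rankOne ℂ v v) n g
  obtain ⟨S, hS, φ, hφ, hlim⟩ := (isCompact_rankOneHull hf).tendsto_subseq
    (x := fun n => avg (n + 1) f) (birkhoffAverage_rankOne_mem_rankOneHull U f)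
  have hbdd : Bornology.IsBounded
      (range fun n => InnerProductSpace.rankOne ℂ (U^[n] f) (U^[n] f)) :=
    (isCompact_rankOneHull hf).isBounded.subset <| by
      rintro _ ⟨n, rfl⟩
      exact subset_closedConvexHull ⟨_, ⟨n, rfl⟩, rfl⟩
  have hshift : Tendsto (fun n => avg (φ n + 1) (U f)) atTop (nhds S) := by
    have hzero := (tendsto_birkhoffAverage_apply_sub_birkhoffAverage ℝ
      (g := fun v => InnerProductSpace.rankOne ℂ v v) hbdd).comp
      ((tendsto_add_atTop_nat 1).comp hφ.tendsto_atTop)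
    simpa [avg, comp_def] using hzero.add hlim
  refine ⟨S, hS, tendsto_nhds_unique (hshift.mul_const U.toContinuousLinearMap) ?_⟩
  simpa only [avg, birkhoffAverage_rankOne_mul, comp_def]
    using hlim.const_mul U.toContinuousLinearMap

end RankOneHull

section Eigenvectors

variable {H : Type*} [NormedAddCommGroup H] [InnerProductSpace ℂ H]

lemma exists_hasEigenvector_mem_range_of_commute [CompleteSpace H] {S U : H →L[ℂ] H}
    (hcompact : IsCompactOperator S) (hsymm : (S : H →ₗ[ℂ] H).IsSymmetric) (hne : S ≠ 0)
    (hcomm : Commute S U) :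
    ∃ c v, Module.End.HasEigenvector (U : Module.End ℂ H) c v ∧ v ∈ range S := by
  obtain ⟨ν, hν, hν0⟩ : ∃ ν, Module.End.HasEigenvalue (S : Module.End ℂ H) ν ∧ ν ≠ 0 := by
    by_contra! h
    exact hne ((ContinuousLinearMap.eq_zero_of_forall_hasEigenvalue_eq_zero hcompact hsymm).mp h)
  have := ContinuousLinearMap.finite_dimensional_eigenspace hcompact ν hν0
  have hmaps : MapsTo (U : Module.End ℂ H) (Module.End.eigenspace (S : Module.End ℂ H) ν)
      (Module.End.eigenspace (S : Module.End ℂ H) ν) :=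
    Module.End.mapsTo_genEigenspace_of_comm
      (hcomm.map (ContinuousLinearMap.toLinearMapRingHom (R₁ := ℂ) (M₁ := H))) ν 1
  have : Nontrivial (Module.End.eigenspace (S : Module.End ℂ H) ν) :=
    Submodule.nontrivial_iff_ne_bot.mpr hν
  obtain ⟨c, hc⟩ := Module.End.exists_eigenvalue ((U : Module.End ℂ H).restrict hmaps)
  obtain ⟨v, hv⟩ := hc.exists_hasEigenvector
  refine ⟨c, v, ⟨Module.End.mem_eigenspace_iff.mpr (congrArg Subtype.val hv.apply_eq_smul),
    fun h => hv.2 (Subtype.ext h)⟩, ν⁻¹ • (v : H), ?_⟩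
  have hSv : S v = ν • (v : H) := Module.End.mem_eigenspace_iff.mp v.2
  rw [map_smul, hSv, inv_smul_smul₀ hν0]

lemma map_mem_orthogonal_iSup_eigenspace (U : H →ₗᵢ[ℂ] H) {f : H}
    (hf : f ∈ (⨆ c : ℂ, Module.End.eigenspace U.toLinearMap c)ᗮ) :
    U f ∈ (⨆ c : ℂ, Module.End.eigenspace U.toLinearMap c)ᗮ := by
  rw [← Submodule.iInf_orthogonal, Submodule.mem_iInf] at hf ⊢
  refine fun c => (Submodule.mem_orthogonal _ _).mpr fun e he => ?_
  have hUe : U e = c • e := Module.End.mem_eigenspace_iff.mp he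
  have hzero : inner ℂ (U e) (U f) = 0 := by
    rw [U.inner_map_map]
    exact (Submodule.mem_orthogonal _ _).mp (hf c) e he
  rcases eq_or_ne c 0 with rfl | hc
  · have : e = 0 := U.injective (by simpa using hUe)
    simp [this]
  · simpa [hUe, inner_smul_left, hc] using hzero

theorem eq_zero_of_totallyBounded_orbit [CompleteSpace H] (U : H →ₗᵢ[ℂ] H) {f : H}
    (hf : TotallyBounded (range fun n => U^[n] f))
    (horth : f ∈ (⨆ c : ℂ, Module.End.eigenspace U.toLinearMap c)ᗮ) : f = 0 := by
  by_contra hne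
  have hnorm (n : ℕ) : ‖U^[n] f‖ = ‖f‖ := by
    rw [← LinearIsometry.coe_pow, LinearIsometry.norm_map]
  have horbit : (range fun n => U^[n] f) ⊆
      (⨆ c : ℂ, Module.End.eigenspace U.toLinearMap c)ᗮ := by
    rintro _ ⟨n, rfl⟩
    exact MapsTo.iterate (fun _ => map_mem_orthogonal_iSup_eigenspace U) n horth
  obtain ⟨S, hS, hcomm⟩ := exists_mem_rankOneHull_commute U hf
  have hS0 : S ≠ 0 := by
    rintro rfl
    refine zero_notMem_rankOneHull hf (norm_pos_iff.mpr hne) ?_ hS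
    rintro _ ⟨n, rfl⟩
    exact (hnorm n).ge
  obtain ⟨c, v, hv, x, rfl⟩ := exists_hasEigenvector_mem_range_of_commute
    (isCompactOperator_of_mem_rankOneHull hS) (isSymmetric_of_mem_rankOneHull hS) hS0 hcomm
  have hSx := apply_mem_of_mem_rankOneHull (Submodule.isClosed_orthogonal _) horbit hS x
  exact hv.2 (inner_self_eq_zero.mp
    ((Submodule.mem_orthogonal _ _).mp hSx _ (Submodule.mem_iSup_of_mem c hv.1)))

end Eigenvectors

section TotallyBoundedOrbits

variable {α ι : Type*} [PseudoMetricSpace α]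

lemma totallyBounded_range_iff {u : ι → α} :
    TotallyBounded (range u) ↔
      ∀ ε > 0, ∃ t : Set α, t.Finite ∧ ∀ i, ∃ y ∈ t, dist (u i) y < ε := by
  simp only [Metric.totallyBounded_iff, range_subset_iff, mem_iUnion₂, Metric.mem_ball,
    exists_prop]

lemma exists_separated_seq_of_not_totallyBounded {u : ι → α} (hu : ¬ TotallyBounded (range u)) :
    ∃ ε > 0, ∃ φ : ℕ → ι, Pairwise fun m n => ε ≤ dist (u (φ m)) (u (φ n)) := by
  rw [totallyBounded_range_iff] at hu
  push Not at hu
  obtain ⟨ε, hε, hu⟩ := hu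
  have hfar (s : Finset ι) : ∃ k, ∀ m ∈ s, ε ≤ dist (u m) (u k) := by
    obtain ⟨k, hk⟩ := hu (u '' s) (s.finite_toSet.image u)
    exact ⟨k, fun m hm => dist_comm (u k) (u m) ▸ hk _ (mem_image_of_mem u hm)⟩
  obtain ⟨φ, -, hφ⟩ := exists_seq_of_forall_finset_exists (fun _ => True)
    (fun m k => ε ≤ dist (u m) (u k)) fun s _ => (hfar s).imp fun k hk => ⟨trivial, hk⟩
  refine ⟨ε, hε, φ, fun m n hmn => ?_⟩
  rcases hmn.lt_or_gt with h | h
  · exact hφ m n h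
  · exact dist_comm (u (φ n)) (u (φ m)) ▸ hφ n m h

lemma injOn_add_of_separated_of_cluster {f : α → α} (hf : Isometry f) (x : α) {η : ℝ}
    {s B : Set ℕ} {φ : ℕ → ℕ} (hsep : s.Pairwise fun m n => η < dist (f^[φ m] x) (f^[φ n] x))
    (hB : ∀ i ∈ B, ∀ j ∈ B, dist (f^[i] x) (f^[j] x) ≤ η) :
    InjOn (fun p : ℕ × ℕ => φ p.1 + p.2) (s ×ˢ B) := by
  have hiter (k : ℕ) (y z : α) : dist (f^[k] y) (f^[k] z) = dist y z := by
    induction k with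
    | zero => rfl
    | succ k ih => rw [iterate_succ_apply', iterate_succ_apply', hf.dist_eq, ih]
  rintro ⟨m, i⟩ ⟨hm, hi⟩ ⟨n, j⟩ ⟨hn, hj⟩ heq
  simp only at hm hi hn hj heq
  obtain rfl : m = n := by
    by_contra hmn
    have hlt : η < dist (f^[φ m] x) (f^[φ n] x) := hsep hm hn hmn
    rw [← hiter i, ← iterate_add_apply, ← iterate_add_apply, add_comm i, heq,
      add_comm i, iterate_add_apply, iterate_add_apply, hiter] at hlt
    exact (hB j hj i hi).not_gt hlt
  simpa using heq

theorem totallyBounded_orbit_of_clusters {f : α → α} (hf : Isometry f) (x : α)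
    (h : ∀ η > 0, ∃ N : ℕ, ∀ n, 1 ≤ n → ∃ B ⊆ Finset.range n,
      n ≤ N * B.card ∧ ∀ i ∈ B, ∀ j ∈ B, dist (f^[i] x) (f^[j] x) ≤ η) :
    TotallyBounded (range fun n => f^[n] x) := by
  by_contra hx
  obtain ⟨ε, hε, φ, hφ⟩ := exists_separated_seq_of_not_totallyBounded hx
  obtain ⟨N, hN⟩ := h (ε / 2) (by positivity)
  set M := (Finset.range (N + 1)).sup φ
  obtain ⟨B, hBn, hBN, hB⟩ := hN (N * M + 1) (by omega)
  have hinj := injOn_add_of_separated_of_cluster hf x (s := ↑(Finset.range (N + 1)))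
    (fun m _ n _ hmn => (half_lt_self hε).trans_le (hφ hmn)) hB
  rw [← Finset.coe_product] at hinj
  have hmaps : ∀ p ∈ Finset.range (N + 1) ×ˢ B, φ p.1 + p.2 ∈ Finset.range (N * M + 1 + M) := by
    intro p hp
    obtain ⟨hp₁, hp₂⟩ := Finset.mem_product.mp hp
    have h₁ : φ p.1 ≤ M := Finset.le_sup hp₁
    have h₂ := Finset.mem_range.mp (hBn hp₂)
    rw [Finset.mem_range]
    omega
  have hcard : (N + 1) * B.card ≤ N * M + 1 + M := by
    simpa using Finset.card_le_card_of_injOn _ hmaps hinj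
  nlinarith

end TotallyBoundedOrbits

section AlmostPeriodic

variable {𝕜 E : Type*} [NormedField 𝕜] [SeminormedAddCommGroup E] [NormedSpace 𝕜 E]

/-- The submodule of (Bochner) almost periodic vectors of a linear isometry: the vectors whose
forward orbit is totally bounded. -/
def almostPeriodicVectors (U : E →ₗᵢ[𝕜] E) : Submodule 𝕜 E where
  carrier := {f | TotallyBounded (range fun n => U^[n] f)}
  zero_mem' := by
    simp only [mem_ofPred_eq, iterate_map_zero, range_const]
    exact totallyBounded_singleton 0
  add_mem' {f g} hf hg := totallyBounded_range_iff.mpr fun ε hε => by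
    obtain ⟨s, hs, hfs⟩ := totallyBounded_range_iff.mp hf (ε / 2) (by positivity)
    obtain ⟨t, ht, hgt⟩ := totallyBounded_range_iff.mp hg (ε / 2) (by positivity)
    refine ⟨image2 (· + ·) s t, hs.image2 _ ht, fun n => ?_⟩
    obtain ⟨x, hx, hfx⟩ := hfs n
    obtain ⟨y, hy, hgy⟩ := hgt n
    refine ⟨x + y, mem_image2_of_mem hx hy, ?_⟩
    rw [iterate_map_add]
    linarith [dist_add_add_le (U^[n] f) (U^[n] g) x y]
  smul_mem' c f hf := by
    have : (range fun n => U^[n] (c • f)) = (c • ·) '' range fun n => U^[n] f := by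
      rw [← range_comp]
      congr! 2 with n
      rw [← LinearIsometry.coe_pow, map_smul, comp_apply, LinearIsometry.coe_pow]
    rw [mem_ofPred_eq, this]
    exact TotallyBounded.image hf (uniformContinuous_const_smul c)

lemma isClosed_almostPeriodicVectors (U : E →ₗᵢ[𝕜] E) :
    IsClosed (almostPeriodicVectors U : Set E) := by
  refine isClosed_of_closure_subset fun f hf => totallyBounded_range_iff.mpr fun ε hε => ?_
  obtain ⟨g, hg, hfg⟩ := Metric.mem_closure_iff.mp hf (ε / 2) (by positivity)
  obtain ⟨t, ht, hgt⟩ := totallyBounded_range_iff.mp hg (ε / 2) (by positivity)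
  refine ⟨t, ht, fun n => (hgt n).imp fun y hy => ⟨hy.1, ?_⟩⟩
  have hiter : dist (U^[n] f) (U^[n] g) = dist f g := by
    rw [← LinearIsometry.coe_pow, LinearIsometry.dist_map]
  linarith [dist_triangle (U^[n] f) (U^[n] g) y, hy.2]

lemma mem_almostPeriodicVectors_of_mem_eigenspace {F : Type*} [NormedAddCommGroup F]
    [NormedSpace 𝕜 F] [ProperSpace 𝕜] (U : F →ₗᵢ[𝕜] F) {f : F} {c : 𝕜}
    (hf : f ∈ Module.End.eigenspace U.toLinearMap c) : f ∈ almostPeriodicVectors U := by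
  rcases eq_or_ne f 0 with rfl | hf0
  · exact zero_mem _
  have hUf : U f = c • f := Module.End.mem_eigenspace_iff.mp hf
  have hc : ‖c‖ = 1 := by
    simpa [norm_smul, hf0] using (congrArg norm hUf).symm
  have hiter (n : ℕ) : U^[n] f = c ^ n • f := by
    induction n with
    | zero => simp
    | succ n ih => rw [iterate_succ_apply', ih, map_smul, hUf, smul_smul, pow_succ]
  have horbit : (range fun n => U^[n] f) ⊆ (· • f) '' Metric.closedBall (0 : 𝕜) 1 :=
    range_subset_iff.mpr fun n => ⟨c ^ n, by simp [hc], (hiter n).symm⟩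
  exact ((isCompact_closedBall (0 : 𝕜) 1).image
    (continuous_id.smul continuous_const)).totallyBounded.subset horbit

theorem almostPeriodicVectors_eq_top_iff_dense_iSup_eigenspace {H : Type*} [NormedAddCommGroup H]
    [InnerProductSpace ℂ H] [CompleteSpace H] (U : H →ₗᵢ[ℂ] H) :
    almostPeriodicVectors U = ⊤ ↔
      Dense ((⨆ c : ℂ, Module.End.eigenspace U.toLinearMap c : Submodule ℂ H) : Set H) := by
  rw [Submodule.dense_iff_topologicalClosure_eq_top]
  refine ⟨fun hU => ?_, fun hdense => top_le_iff.mp (hdense ▸ ?_)⟩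
  · rw [Submodule.topologicalClosure_eq_top_iff, Submodule.eq_bot_iff]
    refine fun f hf => eq_zero_of_totallyBounded_orbit U ?_ hf
    have : f ∈ almostPeriodicVectors U := hU ▸ Submodule.mem_top
    exact this
  · exact Submodule.topologicalClosure_minimal _
      (iSup_le fun c f => mem_almostPeriodicVectors_of_mem_eigenspace U)
      (isClosed_almostPeriodicVectors U)

end AlmostPeriodic

section Pigeonhole

variable {ι : Type*}

lemma card_le_two_mul_card_filter_le {s : Finset ι} {e : ι → ℝ} (he : ∀ i ∈ s, 0 ≤ e i) {δ : ℝ}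
    (hδ : 0 < δ) (hsum : ∑ i ∈ s, e i ≤ s.card * δ) :
    s.card ≤ 2 * (s.filter fun i => e i ≤ 2 * δ).card := by
  have hlarge : (s.filter fun i => ¬ e i ≤ 2 * δ).card * (2 * δ) ≤ s.card * δ := by
    refine le_trans ?_ hsum
    rw [← nsmul_eq_mul]
    refine (Finset.card_nsmul_le_sum _ e _ fun i hi => ?_).trans
      (Finset.sum_le_sum_of_subset_of_nonneg (Finset.filter_subset _ _) fun i hi _ => he i hi)
    exact (not_le.mp (Finset.mem_filter.mp hi).2).le
  have hhalf : 2 * (s.filter fun i => ¬ e i ≤ 2 * δ).card ≤ s.card := by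
    have : (2 * (s.filter fun i => ¬ e i ≤ 2 * δ).card : ℝ) ≤ s.card :=
      le_of_mul_le_mul_right (by linarith) hδ
    exact_mod_cast this
  have := Finset.card_filter_add_card_filter_not (s := s) fun i => e i ≤ 2 * δ
  omega

lemma exists_cluster_of_totallyBounded {α : Type*} [PseudoMetricSpace α] {S : Set α}
    (hS : TotallyBounded S) {δ : ℝ} (hδ : 0 < δ) :
    ∃ N : ℕ, ∀ (s : Finset ι) (v : ι → α), (∀ i ∈ s, v i ∈ S) →
      ∃ B ⊆ s, s.card ≤ N * B.card ∧ ∀ i ∈ B, ∀ j ∈ B, dist (v i) (v j) ≤ δ := by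
  classical
  obtain ⟨t, ht, hSt⟩ := Metric.totallyBounded_iff.mp hS (δ / 2) (by positivity)
  lift t to Finset α using ht
  refine ⟨t.card, fun s v hv => ?_⟩
  rcases s.eq_empty_or_nonempty with rfl | ⟨i₀, hi₀⟩
  · exact ⟨∅, subset_rfl, by simp⟩
  have hnear : ∀ i, ∃ y, i ∈ s → y ∈ t ∧ dist (v i) y < δ / 2 := fun i => by
    by_cases hi : i ∈ s
    · simpa [hi] using hSt (hv i hi)
    · exact ⟨v i, fun h => absurd h hi⟩
  choose y hy using hnear
  obtain ⟨z, -, hz⟩ := t.exists_max_image (fun z => (s.filter fun i => y i = z).card)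
    ⟨y i₀, (hy i₀ hi₀).1⟩
  refine ⟨s.filter fun i => y i = z, Finset.filter_subset _ _, ?_, fun i hi j hj => ?_⟩
  · rw [Finset.card_eq_sum_card_fiberwise (s := s) (f := y) (t := t)
      fun i hi => (hy i (Finset.mem_coe.mp hi)).1]
    exact Finset.sum_le_card_nsmul _ _ _ hz
  · obtain ⟨his, hiz⟩ := Finset.mem_filter.mp hi
    obtain ⟨hjs, hjz⟩ := Finset.mem_filter.mp hj
    linarith [dist_triangle_right (v i) (v j) z, hiz ▸ (hy i his).2, hjz ▸ (hy j hjs).2]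

end Pigeonhole

section Covers

variable {X : Type*} [MeasurableSpace X]

lemma exists_measurable_mem {ι : Type*} [Countable ι] [Nonempty ι] [MeasurableSpace ι]
    {B : ι → Set X} (hB : ∀ i, MeasurableSet (B i)) (hcov : ⋃ i, B i = univ) :
    ∃ J : X → ι, Measurable J ∧ ∀ x, x ∈ B (J x) := by
  classical
  obtain ⟨f, hf⟩ := exists_surjective_nat ι
  have hex : ∀ x, ∃ n, x ∈ B (f n) := fun x => by
    obtain ⟨i, hi⟩ := mem_iUnion.mp (hcov ▸ mem_univ x)
    exact (hf i).imp fun n (hn : f n = i) => hn ▸ hi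
  exact ⟨fun x => f (Nat.find (hex x)),
    measurable_from_nat.comp (measurable_find hex fun n => hB (f n)),
    fun x => Nat.find_spec (hex x)⟩

variable {μ : Measure X} {ρ : X → X → ℝ} {ε : ℝ} {k : ℕ}

lemma IsEpsCover.mono {m : ℕ} (h : IsEpsCover μ ρ ε k) (hkm : k ≤ m) : IsEpsCover μ ρ ε m := by
  obtain ⟨A, hA, hcov, hA0, hdiam⟩ := h
  let φ : Fin (k + 1) → Fin (m + 1) := Fin.castLE (by omega)
  have hφ : Injective φ := Fin.castLE_injective (by omega)
  refine ⟨fun i => ⋃ (j) (_ : φ j = i), A j,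
    fun i => .iUnion fun j => .iUnion fun _ => hA j, univ_subset_iff.mp fun x hx => ?_, ?_,
    fun i hi x hx y hy => ?_⟩
  · obtain ⟨j, hj⟩ := mem_iUnion.mp (hcov ▸ hx)
    exact mem_iUnion.mpr ⟨φ j, mem_iUnion₂.mpr ⟨j, rfl, hj⟩⟩
  · refine (measure_mono (iUnion₂_subset fun j hj => ?_)).trans_lt hA0
    rw [hφ (hj.trans (show (0 : Fin (m + 1)) = φ 0 from rfl))]
  · obtain ⟨j, rfl, hxj⟩ := mem_iUnion₂.mp hx
    obtain ⟨j', hj', hyj⟩ := mem_iUnion₂.mp hy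
    rw [hφ hj'] at hyj
    exact hdiam j (fun h0 => hi (h0 ▸ rfl)) x hxj y hyj

lemma exists_isEpsCover_of_epsEntropy_le {C : ℝ≥0∞} (hC : C ≠ ∞) (μ : Measure X) (ε : ℝ) :
    ∃ K : ℕ, ∀ ρ : X → X → ℝ, epsEntropy μ ρ ε ≤ C → IsEpsCover μ ρ ε K := by
  refine ⟨⌈(2 : ℝ) ^ (C + 1).toReal⌉₊, fun ρ hρ => ?_⟩
  obtain ⟨_, ⟨k, hk, rfl⟩, hkC⟩ :=
    sInf_lt_iff.mp (hρ.trans_lt (ENNReal.lt_add_right hC one_ne_zero))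
  refine hk.mono ?_
  rcases Nat.eq_zero_or_pos k with rfl | hk0
  · exact Nat.zero_le _
  have hlog : Real.logb 2 k ≤ (C + 1).toReal :=
    (ENNReal.ofReal_le_iff_le_toReal (ENNReal.add_ne_top.mpr ⟨hC, ENNReal.one_ne_top⟩)).mp hkC.le
  have hpow : (k : ℝ) ≤ 2 ^ (C + 1).toReal :=
    (Real.logb_le_iff_le_rpow one_lt_two (by exact_mod_cast hk0)).mp hlog
  exact_mod_cast hpow.trans (Nat.le_ceil _)

lemma IsEpsCover.epsEntropy_le (h : IsEpsCover μ ρ ε k) :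
    epsEntropy μ ρ ε ≤ ENNReal.ofReal (Real.logb 2 k) :=
  sInf_le ⟨k, h, rfl⟩

lemma IsEpsCover.exists_retraction [Nonempty X] (h : IsEpsCover μ ρ ε k) :
    ∃ (J : X → Fin (k + 1)) (c : Fin (k + 1) → X) (Z : Set X), Measurable J ∧ MeasurableSet Z ∧
      μ Z < ENNReal.ofReal ε ∧ ∀ x ∉ Z, ρ x (c (J x)) < ε := by
  obtain ⟨A, hA, hcov, hA0, hdiam⟩ := h
  obtain ⟨J, hJ, hJA⟩ := exists_measurable_mem hA hcov
  refine ⟨J, fun i => Classical.epsilon (· ∈ A i), A 0, hJ, hA 0, hA0, fun x hx => ?_⟩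
  exact hdiam (J x) (fun h0 => hx (h0 ▸ hJA x)) x (hJA x) _ (Classical.epsilon_spec ⟨x, hJA x⟩)

end Covers

section Clusters

variable {X E ι : Type*} [MeasurableSpace X] {μ : Measure X} [IsProbabilityMeasure μ]
  [NormedAddCommGroup E] {k : ℕ}

lemma integral_norm_sub_le_of_forall_norm_sub_le {f g f' g' : X → E} (hf : Integrable f μ)
    (hg : Integrable g μ) (hf' : Integrable f' μ) (hg' : Integrable g' μ) {δ : ℝ}
    (h : ∀ x, ‖f' x - g' x‖ ≤ δ) :
    ∫ x, ‖f x - g x‖ ∂μ ≤ ∫ x, ‖f x - f' x‖ ∂μ + ∫ x, ‖g x - g' x‖ ∂μ + δ := by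
  have hff : Integrable (fun x => ‖f x - f' x‖) μ := (hf.sub hf').norm
  have hgg : Integrable (fun x => ‖g x - g' x‖) μ := (hg.sub hg').norm
  have hfg : Integrable (fun x => ‖f x - f' x‖ + ‖g x - g' x‖) μ := hff.add hgg
  calc ∫ x, ‖f x - g x‖ ∂μ ≤ ∫ x, (‖f x - f' x‖ + ‖g x - g' x‖ + δ) ∂μ := by
        refine integral_mono (hf.sub hg).norm (hfg.add (integrable_const δ)) fun x => ?_
        rw [show f x - g x = f x - f' x + (g' x - g x) + (f' x - g' x) by abel,
          norm_sub_rev (g x)]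
        exact norm_add₃_le.trans (by gcongr; exact h x)
    _ = _ := by
        rw [integral_add hfg (integrable_const δ), integral_add hff hgg]
        simp

/-- A family of functions which on average is well approximated by functions factoring through a
fixed map to a finite set contains a large `L¹` cluster: the factored functions range over a
totally bounded set of tuples, so pigeonholing applies. -/
lemma exists_cluster_of_sum_integral_le [ProperSpace E] (k : ℕ) {δ : ℝ} (hδ : 0 < δ) :
    ∃ N : ℕ, ∀ (a : ι → X → E), (∀ i, StronglyMeasurable (a i)) → (∀ i x, ‖a i x‖ ≤ 1) →
      ∀ (J : X → Fin k) (c : Fin k → X), Measurable J → ∀ s : Finset ι,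
      ∑ i ∈ s, ∫ x, ‖a i x - a i (c (J x))‖ ∂μ ≤ s.card * δ →
      ∃ B ⊆ s, s.card ≤ N * B.card ∧
        ∀ i ∈ B, ∀ j ∈ B, ∫ x, ‖a i x - a j x‖ ∂μ ≤ 5 * δ := by
  obtain ⟨N, hN⟩ := exists_cluster_of_totallyBounded (ι := ι)
    (isCompact_closedBall (0 : Fin k → E) 1).totallyBounded hδ
  refine ⟨2 * N, fun a ha ha1 J c hJ s hs => ?_⟩
  have hint i : Integrable (a i) μ :=
    .of_bound (ha i).aestronglyMeasurable 1 (Eventually.of_forall (ha1 i))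
  have hint' i : Integrable (fun x => a i (c (J x))) μ :=
    .of_bound (StronglyMeasurable.of_discrete (f := fun l => a i (c l))
      |>.comp_measurable hJ).aestronglyMeasurable 1 (Eventually.of_forall fun x => ha1 i _)
  have hgood := card_le_two_mul_card_filter_le
    (fun i _ => integral_nonneg fun x => norm_nonneg (a i x - a i (c (J x)))) hδ hs
  obtain ⟨B, hBs, hcard, hB⟩ := hN _ (fun i l => a i (c l)) fun i _ =>
    mem_closedBall_zero_iff.mpr ((pi_norm_le_iff_of_nonneg zero_le_one).mpr fun l => ha1 i (c l))
  refine ⟨B, hBs.trans (Finset.filter_subset _ s), by nlinarith, fun i hi j hj => ?_⟩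
  have hclose x : ‖a i (c (J x)) - a j (c (J x))‖ ≤ δ :=
    (dist_eq_norm (a i (c (J x))) (a j (c (J x)))).ge.trans
      ((dist_le_pi_dist (fun l => a i (c l)) (fun l => a j (c l)) (J x)).trans (hB i hi j hj))
  have := integral_norm_sub_le_of_forall_norm_sub_le (hint i) (hint j) (hint' i) (hint' j) hclose
  linarith [(Finset.mem_filter.mp (hBs hi)).2, (Finset.mem_filter.mp (hBs hj)).2]

end Clusters

section Koopman

variable {X : Type*} [MeasurableSpace X] {μ : Measure X} {T : X → X}

/-- The Koopman operator `f ↦ f ∘ T` of a measure-preserving map, on complex `L²`. -/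
noncomputable def koopman (hT : MeasurePreserving T μ μ) : Lp ℂ 2 μ →ₗᵢ[ℂ] Lp ℂ 2 μ :=
  Lp.compMeasurePreservingₗᵢ ℂ T hT

lemma koopman_toLp (hT : MeasurePreserving T μ μ) {g : X → ℂ} (hg : MemLp g 2 μ) :
    koopman hT (hg.toLp g) = (hg.comp_measurePreserving hT).toLp (g ∘ T) :=
  Lp.toLp_compMeasurePreserving hg hT

lemma koopman_iterate_toLp (hT : MeasurePreserving T μ μ) {g : X → ℂ} (hg : MemLp g 2 μ) (i : ℕ) :
    (koopman hT)^[i] (hg.toLp g) =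
      (hg.comp_measurePreserving (hT.iterate i)).toLp (g ∘ T^[i]) := by
  induction i with
  | zero => rfl
  | succ i ih =>
    rw [iterate_succ_apply', ih, koopman_toLp]
    rfl

lemma coeFn_koopman (hT : MeasurePreserving T μ μ) (f : Lp ℂ 2 μ) :
    koopman hT f =ᵐ[μ] f ∘ T :=
  Lp.coeFn_compMeasurePreserving f hT

lemma mem_eigenspace_koopman_iff (hT : MeasurePreserving T μ μ) {f : Lp ℂ 2 μ} {c : ℂ} :
    f ∈ Module.End.eigenspace (koopman hT).toLinearMap c ↔ ∀ᵐ x ∂μ, f (T x) = c * f x := by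
  rw [Module.End.mem_eigenspace_iff, LinearIsometry.coe_toLinearMap, Lp.ext_iff]
  refine eventually_congr ?_
  filter_upwards [coeFn_koopman hT f, Lp.coeFn_smul c f] with x hUf hcf
  rw [hUf, hcf, comp_apply, Pi.smul_apply, smul_eq_mul]

lemma span_eigenfunctions_eq_iSup_eigenspace (hT : MeasurePreserving T μ μ) :
    Submodule.span ℂ {f : Lp ℂ 2 μ | ∃ c : ℂ, ∀ᵐ x ∂μ, f (T x) = c * f x} =
      ⨆ c : ℂ, Module.End.eigenspace (koopman hT).toLinearMap c := by
  rw [Submodule.iSup_eq_span]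
  congr 1
  ext f
  simp only [mem_ofPred_eq, mem_iUnion, SetLike.mem_coe, mem_eigenspace_koopman_iff]

lemma sq_dist_toLp_le {E : Type*} [NormedAddCommGroup E] [IsFiniteMeasure μ] {f g : X → E}
    (hf : MemLp f 2 μ) (hg : MemLp g 2 μ) {C : ℝ} (hfg : ∀ x, ‖f x - g x‖ ≤ C) :
    dist (hf.toLp f) (hg.toLp g) ^ 2 ≤ C * ∫ x, ‖f x - g x‖ ∂μ := by
  have hsub := hf.sub hg
  have hint : Integrable (fun x => ‖f x - g x‖) μ := (hsub.integrable one_le_two).norm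
  calc dist (hf.toLp f) (hg.toLp g) ^ 2 = ∫ x, ‖f x - g x‖ ^ 2 ∂μ := by
        rw [dist_eq_norm, ← MemLp.toLp_sub, Lp.norm_toLp,
          hsub.eLpNorm_eq_integral_rpow_norm two_ne_zero ENNReal.ofNat_ne_top,
          ENNReal.toReal_ofReal (by positivity), ENNReal.toReal_ofNat, ← Real.rpow_natCast,
          ← Real.rpow_mul (integral_nonneg fun x => by positivity)]
        norm_num
    _ ≤ ∫ x, C * ‖f x - g x‖ ∂μ := by
        refine integral_mono_of_nonneg (Eventually.of_forall fun x => by positivity)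
          (hint.const_mul C) (Eventually.of_forall fun x => ?_)
        dsimp only
        rw [sq]
        gcongr
        exact hfg x
    _ = C * ∫ x, ‖f x - g x‖ ∂μ := integral_const_mul _ _

end Koopman

section BoundedEntropies

variable {X : Type*}

/-- The average `ρ_n^{av}(x, y) = n⁻¹ ∑_{k < n} ρ(T^k x, T^k y)` of a semimetric along a
transformation. -/
noncomputable def averageSemimetric (T : X → X) (ρ : X → X → ℝ) (n : ℕ) : X → X → ℝ :=
  fun x y => (∑ k ∈ Finset.range n, ρ (T^[k] x) (T^[k] y)) / n

lemma sum_norm_sub_iterate_le_mul_averageSemimetric {E : Type*} [NormedAddCommGroup E]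
    {T : X → X} {ρ : X → X → ℝ} {g : X → E} {L : ℝ} (hlip : ∀ x y, ‖g x - g y‖ ≤ L * ρ x y)
    (x y : X) (n : ℕ) :
    ∑ i ∈ Finset.range n, ‖g (T^[i] x) - g (T^[i] y)‖ ≤
      n * (L * averageSemimetric T ρ n x y) := by
  rcases eq_or_ne n 0 with rfl | hn
  · simp
  calc ∑ i ∈ Finset.range n, ‖g (T^[i] x) - g (T^[i] y)‖
      ≤ ∑ i ∈ Finset.range n, L * ρ (T^[i] x) (T^[i] y) := Finset.sum_le_sum fun i _ => hlip _ _
    _ = n * (L * averageSemimetric T ρ n x y) := by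
        rw [← Finset.mul_sum, averageSemimetric]
        field_simp

variable [MeasurableSpace X] (μ : Measure X) (T : X → X) (ρ : X → X → ℝ)

/-- For every `ε > 0` the `ε`-entropies of the averages of `ρ` along `T` are uniformly bounded. -/
def HasBoundedAverageEntropies : Prop :=
  ∀ ε : ℝ, 0 < ε → ∃ C : ℝ≥0∞, C ≠ ∞ ∧ ∀ n : ℕ, 1 ≤ n →
    epsEntropy μ (averageSemimetric T ρ n) ε ≤ C

variable {μ T ρ} {ε : ℝ}

lemma HasBoundedAverageEntropies.exists_isEpsCover (h : HasBoundedAverageEntropies μ T ρ)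
    (hε : 0 < ε) : ∃ k : ℕ, ∀ n, 1 ≤ n → IsEpsCover μ (averageSemimetric T ρ n) ε k := by
  obtain ⟨C, hC, hle⟩ := h ε hε
  obtain ⟨k, hk⟩ := exists_isEpsCover_of_epsEntropy_le hC μ ε
  exact ⟨k, fun n hn => hk _ (hle n hn)⟩

lemma integral_le_add_mul_measureReal [IsProbabilityMeasure μ] {f : X → ℝ} (hf : Integrable f μ)
    {Z : Set X} (hZ : MeasurableSet Z) {a b : ℝ} (hfa : ∀ x ∉ Z, f x ≤ a)
    (hfb : ∀ x ∈ Z, f x ≤ a + b) : ∫ x, f x ∂μ ≤ a + b * μ.real Z := by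
  have hb : Integrable (Z.indicator fun _ => b) μ := (integrable_const b).indicator hZ
  calc ∫ x, f x ∂μ ≤ ∫ x, (a + Z.indicator (fun _ => b) x) ∂μ := by
        refine integral_mono hf ((integrable_const a).add hb) fun x => ?_
        by_cases hx : x ∈ Z
        · simpa only [indicator_of_mem hx] using hfb x hx
        · simpa only [indicator_of_notMem hx, add_zero] using hfa x hx
    _ = a + b * μ.real Z := by
        rw [integral_add (integrable_const a) hb, integral_indicator_const b hZ]
        simp [mul_comm]

variable {E : Type*} [NormedAddCommGroup E] {g : X → E} {L : ℝ}

lemma sum_integral_norm_sub_iterate_le [IsProbabilityMeasure μ] (hT : Measurable T)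
    (hg : StronglyMeasurable g) (hg1 : ∀ x, ‖g x‖ ≤ 1) (hL : 0 ≤ L)
    (hlip : ∀ x y, ‖g x - g y‖ ≤ L * ρ x y) (hε : 0 ≤ ε) {k : ℕ} {J : X → Fin k} {c : Fin k → X}
    {Z : Set X} (hJ : Measurable J) (hZ : MeasurableSet Z) (hμZ : μ Z ≤ ENNReal.ofReal ε) {n : ℕ}
    (hρ : ∀ x ∉ Z, averageSemimetric T ρ n x (c (J x)) ≤ ε) :
    ∑ i ∈ Finset.range n, ∫ x, ‖g (T^[i] x) - g (T^[i] (c (J x)))‖ ∂μ ≤ n * ((L + 2) * ε) := by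
  have hint i : Integrable (fun x => ‖g (T^[i] x) - g (T^[i] (c (J x)))‖) μ :=
    ((Integrable.of_bound (hg.comp_measurable (hT.iterate i)).aestronglyMeasurable 1
      (Eventually.of_forall fun x => hg1 _)).sub
    (.of_bound (StronglyMeasurable.of_discrete (f := fun l => g (T^[i] (c l)))
      |>.comp_measurable hJ).aestronglyMeasurable 1 (Eventually.of_forall fun x => hg1 _))).norm
  have hbound x y : ‖g x - g y‖ ≤ 2 := by linarith [norm_sub_le (g x) (g y), hg1 x, hg1 y]
  rw [← integral_finsetSum _ fun i _ => hint i]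
  refine (integral_le_add_mul_measureReal (integrable_finsetSum _ fun i _ => hint i) hZ
    (a := n * (L * ε)) (b := n * 2) (fun x hx => ?_) fun x _ => ?_).trans ?_
  · refine (sum_norm_sub_iterate_le_mul_averageSemimetric hlip _ _ n).trans ?_
    gcongr
    exact hρ x hx
  · have := Finset.sum_le_card_nsmul (Finset.range n)
      (fun i => ‖g (T^[i] x) - g (T^[i] (c (J x)))‖) 2 fun i _ => hbound _ _
    rw [Finset.card_range, nsmul_eq_mul] at this
    exact this.trans (le_add_of_nonneg_left (by positivity))
  · have hZε : μ.real Z ≤ ε := ENNReal.toReal_le_of_le_ofReal hε hμZ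
    calc n * (L * ε) + n * 2 * μ.real Z ≤ n * (L * ε) + n * 2 * ε := by gcongr
      _ = n * ((L + 2) * ε) := by ring

theorem mem_almostPeriodicVectors_koopman_of_lipschitz [IsProbabilityMeasure μ]
    (hT : MeasurePreserving T μ μ) (hρ : HasBoundedAverageEntropies μ T ρ) {g : X → ℂ}
    (hg : StronglyMeasurable g) (hg1 : ∀ x, ‖g x‖ ≤ 1) (hL : 0 ≤ L)
    (hlip : ∀ x y, ‖g x - g y‖ ≤ L * ρ x y) (hgLp : MemLp g 2 μ) :
    hgLp.toLp g ∈ almostPeriodicVectors (koopman hT) := by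
  have : Nonempty X := nonempty_of_isProbabilityMeasure μ
  refine totallyBounded_orbit_of_clusters (koopman hT).isometry _ fun η hη => ?_
  set δ := η ^ 2 / 10
  have hδ : 0 < δ := by positivity
  have hε : 0 < δ / (L + 2) := by positivity
  obtain ⟨k, hk⟩ := hρ.exists_isEpsCover hε
  obtain ⟨N, hN⟩ := exists_cluster_of_sum_integral_le (ι := ℕ) (E := ℂ) (μ := μ) (k + 1) hδ
  refine ⟨N, fun n hn => ?_⟩
  obtain ⟨J, c, Z, hJ, hZ, hμZ, hJc⟩ := (hk n hn).exists_retraction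
  have hsum := sum_integral_norm_sub_iterate_le hT.measurable hg hg1 hL hlip hε.le hJ hZ hμZ.le
    fun x hx => (hJc x hx).le
  rw [mul_div_cancel₀ δ (by positivity : L + 2 ≠ 0)] at hsum
  obtain ⟨B, hBn, hcard, hB⟩ := hN (fun i => g ∘ T^[i])
    (fun i => hg.comp_measurable (hT.measurable.iterate i)) (fun i x => hg1 _) J c hJ
    (Finset.range n) (by simpa using hsum)
  refine ⟨B, hBn, by simpa using hcard, fun i hi j hj => ?_⟩
  rw [koopman_iterate_toLp, koopman_iterate_toLp]
  refine le_of_sq_le_sq ?_ hη.le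
  refine (sq_dist_toLp_le (C := 2) _ _ fun x => ?_).trans ?_
  · exact (norm_sub_le _ _).trans ((add_le_add (hg1 _) (hg1 _)).trans one_add_one_eq_two.le)
  · linarith [hB i hi j hj, show 10 * δ = η ^ 2 by ring]

end BoundedEntropies

section Indicators

variable {X : Type*} {m0 : MeasurableSpace X} {μ : Measure X} [IsFiniteMeasure μ]

lemma tendsto_toLp_of_forall_norm_sub_le {E : Type*} [NormedAddCommGroup E] {F : ℕ → X → E}
    {f : X → E} (hF : ∀ n, MemLp (F n) 2 μ) (hf : MemLp f 2 μ) {C : ℝ}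
    (hbound : ∀ n x, ‖F n x - f x‖ ≤ C)
    (hlim : ∀ x, Tendsto (fun n => F n x) atTop (nhds (f x))) :
    Tendsto (fun n => (hF n).toLp (F n)) atTop (nhds (hf.toLp f)) := by
  have hint : Tendsto (fun n => ∫ x, ‖F n x - f x‖ ∂μ) atTop (nhds 0) := by
    simpa using tendsto_integral_of_dominated_convergence (μ := μ) (f := fun _ => (0 : ℝ))
      (fun _ => C) (fun n => ((hF n).sub hf).aestronglyMeasurable.norm) (integrable_const C)
      (fun n => Eventually.of_forall fun x => (norm_norm _).trans_le (hbound n x))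
      (Eventually.of_forall fun x => tendsto_iff_norm_sub_tendsto_zero.mp (hlim x))
  have hsqrt : Tendsto (fun n => √(C * ∫ x, ‖F n x - f x‖ ∂μ)) atTop (nhds 0) := by
    simpa using (hint.const_mul C).sqrt
  exact tendsto_iff_dist_tendsto_zero.mpr (squeeze_zero (fun _ => dist_nonneg)
    (fun n => Real.le_sqrt_of_sq_le (sq_dist_toLp_le (hF n) hf (hbound n))) hsqrt)

variable {V : Submodule ℂ (Lp ℂ 2 μ)}

lemma indicatorConstLp_iUnion_mem (hV : IsClosed (V : Set (Lp ℂ 2 μ))) {f : ℕ → Set X}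
    (hf : ∀ n, MeasurableSet (f n)) (hd : Pairwise (Disjoint on f))
    (hfV : ∀ n, indicatorConstLp 2 (hf n) (measure_ne_top μ _) (1 : ℂ) ∈ V) :
    indicatorConstLp 2 (MeasurableSet.iUnion hf) (measure_ne_top μ _) (1 : ℂ) ∈ V := by
  have hpart (n : ℕ) : MeasurableSet (⋃ i ∈ Finset.range n, f i) :=
    Finset.measurableSet_biUnion _ fun i _ => hf i
  have hpartV (n : ℕ) : indicatorConstLp 2 (hpart n) (measure_ne_top μ _) (1 : ℂ) ∈ V := by
    induction n with
    | zero => simp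
    | succ n ih =>
      have hdisj : Disjoint (f n) (⋃ i ∈ Finset.range n, f i) :=
        disjoint_iUnion₂_right.mpr fun i hi => hd (Finset.mem_range.mp hi).ne'
      have := V.add_mem (hfV n) ih
      rw [← indicatorConstLp_disjoint_union _ _ _ _ hdisj] at this
      simpa only [Finset.range_add_one, Finset.set_biUnion_insert] using this
  refine hV.mem_of_tendsto (b := atTop) ?_ (Eventually.of_forall hpartV)
  refine tendsto_toLp_of_forall_norm_sub_le (C := 2) _ _ (fun n x => ?_) fun x => ?_
  · have hind (s : Set X) : ‖s.indicator (fun _ => (1 : ℂ)) x‖ ≤ 1 :=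
      (norm_indicator_le_norm_self _ _).trans_eq norm_one
    exact (norm_sub_le_of_le (hind _) (hind _)).trans_eq one_add_one_eq_two
  · exact ((tendsto_indicator_biUnion_finset f (fun _ => (1 : ℂ)) x).comp
      tendsto_finset_range).mono_right (pure_le_nhds _)

lemma indicatorConstLp_mem_of_isPiSystem (hV : IsClosed (V : Set (Lp ℂ 2 μ))) {S : Set (Set X)}
    (hS : IsPiSystem S) (hSm : ∀ s ∈ S, MeasurableSet s) (h1 : Lp.const 2 μ (1 : ℂ) ∈ V)
    (hSV : ∀ s (hs : s ∈ S), indicatorConstLp 2 (hSm s hs) (measure_ne_top μ s) (1 : ℂ) ∈ V)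
    {s : Set X} (hs : MeasurableSet[MeasurableSpace.generateFrom S] s) (hsm : MeasurableSet s) :
    indicatorConstLp 2 hsm (measure_ne_top μ s) (1 : ℂ) ∈ V := by
  have hle : MeasurableSpace.generateFrom S ≤ m0 := MeasurableSpace.generateFrom_le hSm
  induction s, hs using MeasurableSpace.induction_on_inter rfl hS with
  | empty => simp
  | basic t ht => exact hSV t ht
  | compl t ht ih =>
    have hdisj := indicatorConstLp_disjoint_union (p := 2) (hle _ ht) hsm (measure_ne_top μ _)
      (measure_ne_top μ _) disjoint_compl_right (1 : ℂ)
    simp only [union_compl_self, indicatorConstLp_univ] at hdisj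
    rw [eq_sub_of_add_eq' hdisj.symm]
    exact V.sub_mem h1 (ih (hle _ ht))
  | iUnion f hd hf ih =>
    exact indicatorConstLp_iUnion_mem hV (fun n => hle _ (hf n)) hd fun n => ih n (hle _ (hf n))

lemma eq_top_of_forall_indicatorConstLp_mem (hV : IsClosed (V : Set (Lp ℂ 2 μ)))
    (h : ∀ s (hs : MeasurableSet s), indicatorConstLp 2 hs (measure_ne_top μ s) (1 : ℂ) ∈ V) :
    V = ⊤ := by
  refine Submodule.eq_top_iff'.mpr fun f => Lp.induction ENNReal.ofNat_ne_top
    (motive := fun f => f ∈ V) (fun c s hs hμs => ?_) (fun f g _ _ _ hf hg => V.add_mem hf hg) hV f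
  convert V.smul_mem c (h s hs) using 1
  rw [Lp.simpleFunc.coe_indicatorConst, indicatorConstLp, indicatorConstLp,
    ← MemLp.toLp_const_smul]
  congr 1
  ext x
  by_cases hx : x ∈ s <;> simp [hx]

end Indicators

section LipschitzPosSets

variable {X : Type*} {ρ : X → X → ℝ}

lemma IsSemimetric.abs_sub_le (hρ : IsSemimetric ρ) (z x y : X) : |ρ z x - ρ z y| ≤ ρ x y := by
  obtain ⟨-, -, hsymm, htri⟩ := hρ
  rw [abs_le]
  constructor <;> linarith [htri z x y, htri z y x, hsymm x y]

lemma IsMetricFun.eq_of_forall_mem_dense {S D : Set X} (hρ : IsMetricFun ρ)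
    (hD : ∀ x ∈ S, ∀ ε : ℝ, 0 < ε → ∃ y ∈ D, ρ x y < ε) {x y : X} (hx : x ∈ S)
    (hxy : ∀ d ∈ D, ρ d x = ρ d y) : x = y := by
  obtain ⟨⟨hnn, -, hsymm, htri⟩, hsep⟩ := hρ
  refine (hsep x y).mp (le_antisymm (le_of_forall_pos_lt_add fun ε hε => ?_) (hnn x y))
  obtain ⟨d, hdD, hd⟩ := hD x hx (ε / 2) (by positivity)
  linarith [htri x d y, hxy d hdD, hsymm d x]

variable [MeasurableSpace X]

/-- The positivity sets of the measurable functions that are `1`-Lipschitz for the semimetric `ρ`.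
They form a `π`-system, unlike the balls of `ρ`. -/
def lipschitzPosSets (ρ : X → X → ℝ) : Set (Set X) :=
  {s | ∃ u : X → ℝ, Measurable u ∧ (∀ x y, |u x - u y| ≤ ρ x y) ∧ s = {x | 0 < u x}}

lemma isPiSystem_lipschitzPosSets : IsPiSystem (lipschitzPosSets ρ) := by
  rintro _ ⟨u, hu, hul, rfl⟩ _ ⟨v, hv, hvl, rfl⟩ -
  refine ⟨fun x => min (u x) (v x), hu.min hv, fun x y => ?_, ?_⟩
  · exact (abs_min_sub_min_le_max _ _ _ _).trans (max_le (hul x y) (hvl x y))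
  · ext x
    simp

lemma measurableSet_of_mem_lipschitzPosSets {s : Set X} (hs : s ∈ lipschitzPosSets ρ) :
    MeasurableSet s := by
  obtain ⟨u, hu, -, rfl⟩ := hs
  exact measurableSet_lt measurable_const hu

lemma IsSemimetric.measurable_generateFrom_lipschitzPosSets (hρ : IsSemimetric ρ)
    (hm : Measurable (uncurry ρ)) (z : X) :
    Measurable[MeasurableSpace.generateFrom (lipschitzPosSets ρ)] (ρ z) := by
  refine @measurable_of_Ioi _ _ _ _ _ (_) _ _ _ _ fun t => ?_
  refine MeasurableSpace.measurableSet_generateFrom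
    ⟨fun x => ρ z x - t, hm.of_uncurry_left.sub_const t, fun x y => ?_, ?_⟩
  · simpa using hρ.abs_sub_le z x y
  · ext x
    simp

variable {μ : Measure X}

/-- The distances to a dense sequence embed a set of full measure into a countable product, so the
Lusin–Souslin theorem makes every measurable set a preimage up to a null set. -/
lemma exists_ae_eq_generateFrom_lipschitzPosSets [StandardBorelSpace X]
    (hρ : IsMetricFun ρ) (hadm : Admissible μ ρ) {s : Set X} (hs : MeasurableSet s) :
    ∃ t, MeasurableSet[MeasurableSpace.generateFrom (lipschitzPosSets ρ)] t ∧ t =ᵐ[μ] s := by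
  obtain ⟨hm, S, hS, hμS, D, -, hDc, hD⟩ := hadm
  have : Countable D := hDc.to_subtype
  let Φ : X → D → ℝ := fun x d => ρ d x
  have hΦ : Measurable Φ := measurable_pi_iff.mpr fun d => hm.of_uncurry_left
  have hΦgen : Measurable[MeasurableSpace.generateFrom (lipschitzPosSets ρ)] Φ :=
    @measurable_pi_lambda _ _ _ (_) _ _ fun d => hρ.1.measurable_generateFrom_lipschitzPosSets hm d
  have hinj : InjOn Φ S := fun x hx y _ hxy =>
    hρ.eq_of_forall_mem_dense hD hx fun d hd => congrFun hxy ⟨d, hd⟩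
  refine ⟨Φ ⁻¹' (Φ '' (s ∩ S)), hΦgen ((hs.inter hS).image_of_measurable_injOn hΦ
    (hinj.mono inter_subset_right)), ?_⟩
  filter_upwards [mem_ae_iff.mpr hμS] with x hx
  refine propext ⟨?_, fun h => ⟨x, ⟨h, hx⟩, rfl⟩⟩
  rintro ⟨y, ⟨hys, hyS⟩, hyx⟩
  exact hinj hyS hx hyx ▸ hys

end LipschitzPosSets

section BoundedImpliesAlmostPeriodic

variable {X : Type*} [MeasurableSpace X] {μ : Measure X} [IsProbabilityMeasure μ] {T : X → X}
  {ρ : X → X → ℝ}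

lemma const_mem_almostPeriodicVectors_koopman (hT : MeasurePreserving T μ μ) (c : ℂ) :
    Lp.const 2 μ c ∈ almostPeriodicVectors (koopman hT) := by
  have hfix (n : ℕ) : (koopman hT)^[n] (Lp.const 2 μ c) = Lp.const 2 μ c :=
    iterate_fixed (koopman_toLp hT (memLp_const c)) n
  change TotallyBounded (range fun n => (koopman hT)^[n] (Lp.const 2 μ c))
  simpa only [hfix] using finite_range_const.totallyBounded

lemma tendsto_min_one_natCast_mul_max_zero (t : ℝ) :
    Tendsto (fun m : ℕ => min 1 (m * max t 0)) atTop (nhds ((Ioi 0).indicator 1 t)) := by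
  rcases le_or_gt t 0 with ht | ht
  · simp [ht, not_lt.mpr ht]
  · refine tendsto_const_nhds.congr' ?_
    filter_upwards [(tendsto_natCast_atTop_atTop.atTop_mul_const ht).eventually_ge_atTop 1]
      with m hm
    simp [ht, ht.le, hm]

lemma indicatorConstLp_mem_almostPeriodicVectors_of_mem_lipschitzPosSets
    (hT : MeasurePreserving T μ μ) (hρ0 : ∀ x y, 0 ≤ ρ x y)
    (hρ : HasBoundedAverageEntropies μ T ρ) {s : Set X} (hs : s ∈ lipschitzPosSets ρ) :
    indicatorConstLp 2 (measurableSet_of_mem_lipschitzPosSets hs) (measure_ne_top μ s) (1 : ℂ) ∈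
      almostPeriodicVectors (koopman hT) := by
  obtain ⟨u, hu, hul, rfl⟩ := id hs
  let g (m : ℕ) (x : X) : ℂ := (min 1 (m * max (u x) 0) : ℝ)
  have hg m : Measurable (g m) := Complex.measurable_ofReal.comp
    (measurable_const.min ((hu.max measurable_const).const_mul _))
  have hg1 m x : ‖g m x‖ ≤ 1 := by
    rw [Complex.norm_real, Real.norm_of_nonneg (by positivity)]
    exact min_le_left _ _
  have hgLp m : MemLp (g m) 2 μ :=
    .of_bound (hg m).aestronglyMeasurable 1 (Eventually.of_forall (hg1 m))
  have hglip m x y : ‖g m x - g m y‖ ≤ m * ρ x y := by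
    rw [← Complex.ofReal_sub, Complex.norm_real]
    refine (abs_min_sub_min_le_max _ _ _ _).trans (max_le ?_ ?_)
    · simpa using mul_nonneg m.cast_nonneg (hρ0 x y)
    · rw [← mul_sub, abs_mul, Nat.abs_cast]
      gcongr
      exact (abs_max_sub_max_le_abs _ _ _).trans (hul x y)
  refine (isClosed_almostPeriodicVectors (koopman hT)).mem_of_tendsto (b := atTop) ?_
    (Eventually.of_forall fun m => mem_almostPeriodicVectors_koopman_of_lipschitz hT hρ
      (hg m).stronglyMeasurable (hg1 m) m.cast_nonneg (hglip m) (hgLp m))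
  refine tendsto_toLp_of_forall_norm_sub_le (C := 2) hgLp _ (fun m x => ?_) fun x => ?_
  · have hind : ‖{x | 0 < u x}.indicator (fun _ => (1 : ℂ)) x‖ ≤ 1 :=
      (norm_indicator_le_norm_self _ _).trans_eq norm_one
    exact (norm_sub_le_of_le (hg1 m x) hind).trans_eq one_add_one_eq_two
  · have hind : {x | 0 < u x}.indicator (fun _ => (1 : ℂ)) x = ((Ioi 0).indicator 1 (u x) : ℝ) := by
      by_cases hx : 0 < u x <;> simp [hx]
    rw [hind]
    exact (Complex.continuous_ofReal.tendsto _).comp (tendsto_min_one_natCast_mul_max_zero (u x))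

theorem almostPeriodicVectors_koopman_eq_top_of_hasBoundedAverageEntropies
    [StandardBorelSpace X] (hT : MeasurePreserving T μ μ) (hρ : IsMetricFun ρ)
    (hadm : Admissible μ ρ) (hent : HasBoundedAverageEntropies μ T ρ) :
    almostPeriodicVectors (koopman hT) = ⊤ := by
  have hclosed := isClosed_almostPeriodicVectors (koopman hT)
  refine eq_top_of_forall_indicatorConstLp_mem hclosed fun s hs => ?_
  obtain ⟨t, ht, hts⟩ := exists_ae_eq_generateFrom_lipschitzPosSets hρ hadm hs
  have htm : MeasurableSet t :=
    MeasurableSpace.generateFrom_le (fun _ => measurableSet_of_mem_lipschitzPosSets) t ht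
  rw [(indicatorConstLp_inj hs (measure_ne_top μ s) htm (measure_ne_top μ t) one_ne_zero).mpr
    hts.symm]
  exact indicatorConstLp_mem_of_isPiSystem hclosed isPiSystem_lipschitzPosSets
    (fun _ => measurableSet_of_mem_lipschitzPosSets)
    (const_mem_almostPeriodicVectors_koopman hT 1)
    (fun _ => indicatorConstLp_mem_almostPeriodicVectors_of_mem_lipschitzPosSets hT hρ.1.1 hent)
    ht htm

end BoundedImpliesAlmostPeriodic

section SimpleApproximation

variable {X : Type*} [MeasurableSpace X] {μ : Measure X}

lemma tendsto_measure_natCast_le [IsFiniteMeasure μ] {J : X → ℕ} (hJ : Measurable J) :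
    Tendsto (fun N : ℕ => μ {x | N ≤ J x}) atTop (nhds 0) := by
  have hempty : ⋂ N : ℕ, {x | N ≤ J x} = ∅ :=
    eq_empty_of_forall_notMem fun x hx => (mem_iInter.mp hx (J x + 1)).not_gt (Nat.lt_succ_self _)
  rw [← measure_empty (μ := μ), ← hempty]
  exact tendsto_measure_iInter_atTop
    (fun N => (measurableSet_le measurable_const hJ).nullMeasurableSet)
    (fun M N hMN x hx => le_trans hMN hx) ⟨0, measure_ne_top _ _⟩

lemma Admissible.exists_measurable_index [NeZero μ] {ρ : X → X → ℝ} (hadm : Admissible μ ρ)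
    (hsymm : ∀ x y, ρ x y = ρ y x) {δ : ℝ} (hδ : 0 < δ) :
    ∃ (p : ℕ → X) (J : X → ℕ), Measurable J ∧ ∀ᵐ x ∂μ, ρ (p (J x)) x < δ := by
  obtain ⟨hm, S, hS, hμS, D, -, hDc, hD⟩ := hadm
  have hae : ∀ᵐ x ∂μ, x ∈ S := hμS
  obtain ⟨x, hx⟩ := hae.exists
  obtain ⟨d, rfl⟩ := hDc.exists_eq_range ((hD x hx 1 one_pos).imp fun _ => And.left)
  obtain ⟨J, hJ, hJB⟩ := exists_measurable_mem (B := fun l => {x | ρ (d l) x < δ} ∪ Sᶜ)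
    (fun l => (measurableSet_lt hm.of_uncurry_left measurable_const).union hS.compl)
    (eq_univ_of_forall fun x => mem_iUnion.mpr <| by
      by_cases hx : x ∈ S
      · obtain ⟨_, ⟨l, rfl⟩, hl⟩ := hD x hx δ hδ
        exact ⟨l, Or.inl ((hsymm _ _).trans_lt hl)⟩
      · exact ⟨0, Or.inr hx⟩)
  refine ⟨d, J, hJ, ?_⟩
  filter_upwards [hae] with x hx
  exact (hJB x).resolve_right (not_not_intro hx)

variable [IsProbabilityMeasure μ] {ρ : X → X → ℝ}

/-- A dense sequence quantizes all but a set of small measure; the rest is sent to a base point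
`x₀` with `ρ x₀` integrable. -/
lemma Admissible.exists_simpleFunc_integral_le (hadm : Admissible μ ρ) (hρ : IsSemimetric ρ)
    (hint : Integrable (uncurry ρ) (μ.prod μ)) {δ : ℝ} (hδ : 0 < δ) :
    ∃ F : SimpleFunc X X, Integrable (fun x => ρ (F x) x) μ ∧ ∫ x, ρ (F x) x ∂μ ≤ δ := by
  have hm := hadm.1
  obtain ⟨hnn, -, hsymm, -⟩ := hρ
  obtain ⟨d, J, hJ, hJd⟩ := hadm.exists_measurable_index hsymm (half_pos hδ)
  obtain ⟨x₀, hx₀ : Integrable (ρ x₀) μ⟩ := hint.prod_right_ae.exists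
  have htail : Tendsto (fun N : ℕ => ∫ x in {x | N ≤ J x}, ρ x₀ x ∂μ) atTop (nhds 0) :=
    hx₀.tendsto_setIntegral_nhds_zero (tendsto_measure_natCast_le hJ)
  obtain ⟨N, hN⟩ := (htail.eventually_lt_const (half_pos hδ)).exists
  have hset : MeasurableSet {x | N ≤ J x} := measurableSet_le measurable_const hJ
  let J' : SimpleFunc X ℕ := ⟨fun x => min (J x) N,
    fun n => (hJ.min measurable_const) (measurableSet_singleton n),
    (finite_Iic N).subset (range_subset_iff.mpr fun x => mem_Iic.mpr (min_le_right _ _))⟩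
  let F : SimpleFunc X X := J'.map fun l => if l < N then d l else x₀
  have hF x : F x = if J x < N then d (J x) else x₀ := by
    by_cases hx : J x < N
    · simp [F, J', hx, hx.le]
    · simp [F, J', hx, not_lt.mp hx]
  have hFm : Measurable fun x => ρ (F x) x := hm.comp
    (((measurable_from_nat (f := fun l => if l < N then d l else x₀)).comp
      J'.measurable).prodMk measurable_id)
  have hbI : Integrable (fun x => δ / 2 + {x | N ≤ J x}.indicator (ρ x₀) x) μ :=
    (integrable_const _).add (hx₀.indicator hset)
  have hle : ∀ᵐ x ∂μ, ρ (F x) x ≤ δ / 2 + {x | N ≤ J x}.indicator (ρ x₀) x := by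
    filter_upwards [hJd] with x hx
    by_cases hxN : J x < N
    · simpa [hF, hxN] using hx.le
    · simpa [hF, hxN, not_lt.mp hxN] using (half_pos hδ).le
  have hFI : Integrable (fun x => ρ (F x) x) μ :=
    hbI.mono' hFm.aestronglyMeasurable (by simpa only [Real.norm_of_nonneg (hnn _ _)] using hle)
  refine ⟨F, hFI, (integral_mono_ae hFI hbI hle).trans ?_⟩
  rw [integral_add (integrable_const _) (hx₀.indicator hset), integral_indicator hset]
  simp only [integral_const, probReal_univ, one_smul]
  linarith

lemma exists_forall_le_abs_sub_of_finite {α : Type*} {s : Set α} (hs : s.Finite) {σ : α → α → ℝ}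
    (hσ : ∀ a, σ a a = 0) : ∃ h : α → ℝ, ∀ a ∈ s, ∀ b ∈ s, σ a b ≤ |h a - h b| := by
  obtain ⟨e, he⟩ := countable_iff_exists_injOn.mp hs.countable
  obtain ⟨M, hM⟩ := ((hs.prod hs).image (uncurry σ)).bddAbove
  refine ⟨fun a => max M 0 * e a, fun a ha b hb => ?_⟩
  by_cases hab : a = b
  · simp [hab, hσ]
  have h1 : (1 : ℝ) ≤ |(e a : ℝ) - e b| := by
    have : (1 : ℤ) ≤ |(e a : ℤ) - e b| :=
      Int.one_le_abs (sub_ne_zero.mpr (by exact_mod_cast he.ne ha hb hab))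
    exact_mod_cast this
  calc σ a b ≤ max M 0 := le_max_of_le_left (hM ⟨(a, b), ⟨ha, hb⟩, rfl⟩)
    _ ≤ max M 0 * |(e a : ℝ) - e b| := le_mul_of_one_le_right (le_max_right _ _) h1
    _ = |max M 0 * e a - max M 0 * e b| := by
      rw [← mul_sub, abs_mul, abs_of_nonneg (le_max_right M 0)]

lemma Admissible.exists_le_add_add_abs_sub_simpleFunc (hadm : Admissible μ ρ)
    (hρ : IsSemimetric ρ) (hint : Integrable (uncurry ρ) (μ.prod μ)) {δ : ℝ} (hδ : 0 < δ) :
    ∃ (f : SimpleFunc X ℝ) (r : X → ℝ), (∀ x, 0 ≤ r x) ∧ Integrable r μ ∧ ∫ x, r x ∂μ ≤ δ ∧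
      ∀ x y, ρ x y ≤ r x + r y + |f x - f y| := by
  obtain ⟨F, hFI, hFδ⟩ := hadm.exists_simpleFunc_integral_le hρ hint hδ
  obtain ⟨hnn, hdiag, hsymm, htri⟩ := hρ
  obtain ⟨h, hh⟩ := exists_forall_le_abs_sub_of_finite F.finite_range hdiag
  refine ⟨F.map h, fun x => ρ (F x) x, fun x => hnn _ _, hFI, hFδ, fun x y => ?_⟩
  have := hh (F x) (mem_range_self x) (F y) (mem_range_self y)
  simp only [SimpleFunc.map_apply]
  linarith [htri x (F x) y, htri (F x) (F y) y, hsymm x (F x)]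

end SimpleApproximation

section UniformCovers

variable {X : Type*} {ρ : X → X → ℝ}

lemma averageSemimetric_le_of_forall_le {T : X → X} {e : ℕ → X → ℝ} {σ : ℝ} {x y : X}
    (h : ∀ k, ρ (T^[k] x) (T^[k] y) ≤ e k x + e k y + σ) {n : ℕ} (hn : 1 ≤ n) :
    averageSemimetric T ρ n x y ≤
      (∑ k ∈ Finset.range n, e k x) / n + (∑ k ∈ Finset.range n, e k y) / n + σ := by
  have : (n : ℝ) ≠ 0 := by positivity
  calc averageSemimetric T ρ n x y
      ≤ (∑ k ∈ Finset.range n, (e k x + e k y + σ)) / n := by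
        unfold averageSemimetric
        gcongr with k
        exact h k
    _ = _ := by
        simp only [Finset.sum_add_distrib, Finset.sum_const, Finset.card_range, nsmul_eq_mul]
        field_simp

variable [MeasurableSpace X] {μ : Measure X}

lemma isEpsCover_of_index {ε : ℝ} {J : X → ℕ} (hJ : Measurable J) {Z : Set X} {N : ℕ}
    (hμZ : μ Z < ENNReal.ofReal ε) (hN : ∀ x ∉ Z, J x < N)
    (h : ∀ x ∉ Z, ∀ y ∉ Z, J x = J y → ρ x y < ε) : IsEpsCover μ ρ ε N := by
  have hZ {x : X} (hx : x ∉ toMeasurable μ Z) : x ∉ Z := notMem_subset (subset_toMeasurable μ Z) hx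
  refine ⟨Fin.cons (toMeasurable μ Z) fun i : Fin N => {x | J x = i} \ toMeasurable μ Z, ?_, ?_,
    (measure_toMeasurable Z).trans_lt hμZ, ?_⟩
  · refine Fin.cases (measurableSet_toMeasurable μ Z) fun i => ?_
    exact (hJ (measurableSet_singleton (i : ℕ))).diff (measurableSet_toMeasurable μ Z)
  · refine eq_univ_of_forall fun x => mem_iUnion.mpr ?_
    by_cases hx : x ∈ toMeasurable μ Z
    · exact ⟨0, hx⟩
    · exact ⟨Fin.succ ⟨J x, hN x (hZ hx)⟩, rfl, hx⟩
  · refine Fin.cases (fun h0 => absurd rfl h0) fun i _ x hx y hy => ?_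
    exact h x (hZ hx.2) y (hZ hy.2) (hx.1.trans hy.1.symm)

lemma measure_ge_le_of_integral_le_sq [IsFiniteMeasure μ] {e : X → ℝ} (he0 : ∀ x, 0 ≤ e x)
    (he : Integrable e μ) {a : ℝ} (ha : 0 < a) (hea : ∫ x, e x ∂μ ≤ a ^ 2) :
    μ {x | a ≤ e x} ≤ ENNReal.ofReal a := by
  have hmarkov := mul_meas_ge_le_integral_of_nonneg (Eventually.of_forall he0) he a
  rw [← ofReal_measureReal]
  refine ENNReal.ofReal_le_ofReal (le_of_mul_le_mul_left ?_ ha)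
  exact hmarkov.trans (hea.trans_eq (sq a))

lemma exists_isEpsCover_of_le_add_add_dist [IsFiniteMeasure μ] {E : Type*} [PseudoMetricSpace E]
    [TopologicalSpace.SeparableSpace E] [Nonempty E] [MeasurableSpace E] [OpensMeasurableSpace E]
    {Φ : X → E} (hΦ : Measurable Φ) {ε : ℝ} (hε : 0 < ε) :
    ∃ N : ℕ, ∀ (σ : X → X → ℝ) (e : X → ℝ), (∀ x, 0 ≤ e x) → Integrable e μ →
      ∫ x, e x ∂μ ≤ (ε / 4) ^ 2 → (∀ x y, σ x y ≤ e x + e y + dist (Φ x) (Φ y)) →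
      IsEpsCover μ σ ε N := by
  let d := TopologicalSpace.denseSeq E
  obtain ⟨J, hJ, hJB⟩ := exists_measurable_mem (B := fun l => Φ ⁻¹' Metric.ball (d l) (ε / 4))
    (fun l => hΦ Metric.isOpen_ball.measurableSet)
    (eq_univ_of_forall fun x => mem_iUnion.mpr
      ((TopologicalSpace.denseRange_denseSeq E).exists_dist_lt (Φ x) (by positivity)))
  obtain ⟨N, hN⟩ := ((tendsto_measure_natCast_le (μ := μ) hJ).eventually_lt_const
    (ENNReal.ofReal_pos.mpr (half_pos hε))).exists
  refine ⟨N, fun σ e he0 he heε hσ => isEpsCover_of_index hJ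
    (Z := {x | ε / 4 ≤ e x} ∪ {x | N ≤ J x}) ?_ (fun x hx => ?_) fun x hx y hy hxy => ?_⟩
  · calc μ ({x | ε / 4 ≤ e x} ∪ {x | N ≤ J x})
        ≤ μ {x | ε / 4 ≤ e x} + μ {x | N ≤ J x} := measure_union_le _ _
      _ < ENNReal.ofReal (ε / 4) + ENNReal.ofReal (ε / 2) :=
          ENNReal.add_lt_add_of_le_of_lt (measure_ne_top _ _)
            (measure_ge_le_of_integral_le_sq he0 he (by positivity) heε) hN
      _ ≤ ENNReal.ofReal ε := by
          rw [← ENNReal.ofReal_add (by positivity) (by positivity)]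
          exact ENNReal.ofReal_le_ofReal (by linarith)
  · exact not_le.mp (not_or.mp hx).2
  · have hex : e x < ε / 4 := not_le.mp (not_or.mp hx).1
    have hey : e y < ε / 4 := not_le.mp (not_or.mp hy).1
    have hdx : dist (Φ x) (d (J x)) < ε / 4 := hJB x
    have hdy : dist (Φ y) (d (J x)) < ε / 4 := hxy ▸ hJB y
    linarith [hσ x y, dist_triangle_right (Φ x) (Φ y) (d (J x))]

lemma integral_sum_range_div_le {e : ℕ → X → ℝ} (he : ∀ k, Integrable (e k) μ) {δ : ℝ}
    (heδ : ∀ k, ∫ x, e k x ∂μ ≤ δ) {n : ℕ} (hn : 1 ≤ n) :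
    ∫ x, (∑ k ∈ Finset.range n, e k x) / n ∂μ ≤ δ := by
  have hn0 : (0 : ℝ) < n := by exact_mod_cast hn
  rw [integral_div, integral_finsetSum _ fun k _ => he k, div_le_iff₀ hn0, mul_comm]
  simpa using Finset.sum_le_card_nsmul (Finset.range n) _ δ fun k _ => heδ k

end UniformCovers

section AlmostPeriodicImpliesBounded

variable {X : Type*} [MeasurableSpace X] {μ : Measure X} [IsProbabilityMeasure μ] {T : X → X}
  {ρ : X → X → ℝ}

lemma integral_norm_sub_le_dist_toLp {E : Type*} [NormedAddCommGroup E] {f : X → E}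
    (hf : MemLp f 2 μ) (g : Lp E 2 μ) : ∫ x, ‖f x - g x‖ ∂μ ≤ dist (hf.toLp f) g := by
  have hint : ∫ x, ‖f x - g x‖ ∂μ = ∫ x, ‖(hf.toLp f - g : Lp E 2 μ) x‖ ∂μ := by
    refine integral_congr_ae ?_
    filter_upwards [Lp.coeFn_sub (hf.toLp f) g, hf.coeFn_toLp] with x hsub hfx
    rw [hsub, Pi.sub_apply, hfx]
  rw [hint, integral_norm_eq_lintegral_enorm (Lp.aestronglyMeasurable _),
    ← eLpNorm_one_eq_lintegral_enorm, dist_eq_norm, Lp.norm_def]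
  exact ENNReal.toReal_mono (Lp.eLpNorm_ne_top _)
    (eLpNorm_le_eLpNorm_of_exponent_le one_le_two (Lp.aestronglyMeasurable _))

lemma exists_finset_forall_integral_norm_sub_le (hT : MeasurePreserving T μ μ) {f : X → ℂ}
    (hf : MemLp f 2 μ) (hfT : hf.toLp f ∈ almostPeriodicVectors (koopman hT)) {δ : ℝ}
    (hδ : 0 < δ) :
    ∃ t : Finset (Lp ℂ 2 μ), ∀ k, ∃ g ∈ t, ∫ x, ‖f (T^[k] x) - g x‖ ∂μ ≤ δ := by
  obtain ⟨t, ht, h⟩ := totallyBounded_range_iff.mp hfT δ hδ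
  refine ⟨ht.toFinset, fun k => (h k).imp fun g ⟨hg, hgδ⟩ => ⟨ht.mem_toFinset.mpr hg, ?_⟩⟩
  rw [koopman_iterate_toLp] at hgδ
  exact (integral_norm_sub_le_dist_toLp _ g).trans hgδ.le

/-- The error at time `k` consists of `r ∘ T^k` and of the distance from `f ∘ T^k` to the nearest
element of a finite net of its orbit, where `ρ x y ≤ r x + r y + |f x - f y|`. -/
lemma exists_finset_forall_iterate_le (hT : MeasurePreserving T μ μ)
    (hU : almostPeriodicVectors (koopman hT) = ⊤) (hρ : IsSemimetric ρ) (hadm : Admissible μ ρ)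
    (hint : Integrable (uncurry ρ) (μ.prod μ)) {δ : ℝ} (hδ : 0 < δ) :
    ∃ (t : Finset (Lp ℂ 2 μ)) (e : ℕ → X → ℝ), (∀ k x, 0 ≤ e k x) ∧
      (∀ k, Integrable (e k) μ) ∧ (∀ k, ∫ x, e k x ∂μ ≤ δ) ∧ ∀ k x y,
        ρ (T^[k] x) (T^[k] y) ≤
          e k x + e k y + dist (fun h : t => h.1 x) (fun h : t => h.1 y) := by
  obtain ⟨f, r, hr0, hr, hrδ, hρr⟩ :=
    hadm.exists_le_add_add_abs_sub_simpleFunc hρ hint (half_pos hδ)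
  have hf : MemLp (fun x => (f x : ℂ)) 2 μ := (f.memLp_of_isFiniteMeasure 2 μ).ofReal
  obtain ⟨t, hft⟩ := exists_finset_forall_integral_norm_sub_le hT hf
    (hU ▸ Submodule.mem_top) (half_pos hδ)
  choose g hgt hg using hft
  have hrT k : Integrable (fun x => r (T^[k] x)) μ :=
    (hT.iterate k).integrable_comp_of_integrable hr
  have hfg k : Integrable (fun x => ‖(f (T^[k] x) : ℂ) - g k x‖) μ :=
    (((hf.comp_measurePreserving (hT.iterate k)).sub (Lp.memLp (g k))).integrable one_le_two).norm
  refine ⟨t, fun k x => r (T^[k] x) + ‖(f (T^[k] x) : ℂ) - g k x‖,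
    fun k x => add_nonneg (hr0 _) (norm_nonneg _), fun k => (hrT k).add (hfg k), fun k => ?_,
    fun k x y => ?_⟩
  · have hrk : ∫ x, r (T^[k] x) ∂μ = ∫ x, r x ∂μ := by
      rw [← integral_map (hT.iterate k).aemeasurable, (hT.iterate k).map_eq]
      rw [(hT.iterate k).map_eq]
      exact hr.aestronglyMeasurable
    rw [integral_add (hrT k) (hfg k), hrk]
    linarith [hg k]
  · have hgk : dist (g k x) (g k y) ≤ dist (fun h : t => h.1 x) (fun h : t => h.1 y) :=
      dist_le_pi_dist (fun h : t => h.1 x) (fun h : t => h.1 y) ⟨g k, hgt k⟩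
    have hfk : |f (T^[k] x) - f (T^[k] y)| ≤ ‖(f (T^[k] x) : ℂ) - g k x‖ +
        ‖(f (T^[k] y) : ℂ) - g k y‖ + dist (g k x) (g k y) := by
      rw [← Real.dist_eq, ← Complex.isometry_ofReal.dist_eq, ← dist_eq_norm, ← dist_eq_norm,
        dist_comm (f (T^[k] y) : ℂ), add_right_comm]
      exact dist_triangle4 _ _ _ _
    dsimp only
    linarith [hρr (T^[k] x) (T^[k] y)]

theorem hasBoundedAverageEntropies_of_almostPeriodicVectors_koopman_eq_top
    (hT : MeasurePreserving T μ μ) (hU : almostPeriodicVectors (koopman hT) = ⊤)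
    (hρ : IsSemimetric ρ) (hadm : Admissible μ ρ) (hint : Integrable (uncurry ρ) (μ.prod μ)) :
    HasBoundedAverageEntropies μ T ρ := fun ε hε => by
  obtain ⟨t, e, he0, he, heδ, hρe⟩ := exists_finset_forall_iterate_le hT hU hρ hadm hint
    (δ := (ε / 4) ^ 2) (by positivity)
  obtain ⟨N, hN⟩ := exists_isEpsCover_of_le_add_add_dist (μ := μ) (Φ := fun x (h : t) => h.1 x)
    (measurable_pi_iff.mpr fun h => (Lp.stronglyMeasurable h.1).measurable) hε
  refine ⟨ENNReal.ofReal (Real.logb 2 N), ENNReal.ofReal_ne_top, fun n hn => ?_⟩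
  have havg0 x : 0 ≤ (∑ k ∈ Finset.range n, e k x) / n :=
    div_nonneg (Finset.sum_nonneg fun k _ => he0 k x) n.cast_nonneg
  have havg : Integrable (fun x => (∑ k ∈ Finset.range n, e k x) / n) μ :=
    (integrable_finsetSum _ fun k _ => he k).div_const _
  exact (hN _ _ havg0 havg (integral_sum_range_div_le he heδ hn) fun x y =>
    averageSemimetric_le_of_forall_le (fun k => hρe k x y) hn).epsEntropy_le

end AlmostPeriodicImpliesBounded

section AdmissibleMetric

variable {X E : Type*} {f : X → E}

lemma isMetricFun_dist_comp [MetricSpace E] (hf : Injective f) :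
    IsMetricFun fun x y => dist (f x) (f y) :=
  ⟨⟨fun _ _ => dist_nonneg, fun _ => dist_self _, fun _ _ => dist_comm _ _,
    fun _ _ _ => dist_triangle _ _ _⟩, fun _ _ => dist_eq_zero.trans hf.eq_iff⟩

lemma admissible_dist_comp [PseudoMetricSpace E] [SecondCountableTopology E]
    [MeasurableSpace E] [OpensMeasurableSpace E] [MeasurableSpace X]
    (hf : Measurable f) (μ : Measure X) :
    Admissible μ fun x y => dist (f x) (f y) := by
  refine ⟨(hf.comp measurable_fst).dist (hf.comp measurable_snd), univ, .univ, by simp, ?_⟩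
  let _ : PseudoMetricSpace X := .induced f inferInstance
  have : SecondCountableTopology X :=
    TopologicalSpace.secondCountableTopology_induced X E f
  obtain ⟨D, hD, hDd⟩ := TopologicalSpace.exists_countable_dense X
  exact ⟨D, subset_univ D, hD, fun x _ ε hε => hDd.exists_dist_lt x hε⟩

theorem exists_isMetricFun_admissible_integrable [MeasurableSpace X] [StandardBorelSpace X]
    (μ : Measure X) [IsFiniteMeasure μ] :
    ∃ ρ : X → X → ℝ, IsMetricFun ρ ∧ Admissible μ ρ ∧ Integrable (uncurry ρ) (μ.prod μ) := by
  obtain ⟨e, he⟩ := exists_measurableEmbedding_real X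
  have hm : Measurable fun x => Real.arctan (e x) := Real.measurable_arctan.comp he.measurable
  have hadm := admissible_dist_comp hm μ
  refine ⟨_, isMetricFun_dist_comp (Real.arctan_injective.comp he.injective), hadm, ?_⟩
  refine .of_bound hadm.1.aestronglyMeasurable Real.pi (Eventually.of_forall fun p => ?_)
  rw [uncurry, Real.norm_of_nonneg dist_nonneg, Real.dist_eq, abs_le, comp_apply, comp_apply]
  constructor <;> linarith [Real.arctan_lt_pi_div_two (e p.1),
    Real.neg_pi_div_two_lt_arctan (e p.1), Real.arctan_lt_pi_div_two (e p.2),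
    Real.neg_pi_div_two_lt_arctan (e p.2)]

end AdmissibleMetric

theorem statement17_general {X : Type*} [MeasurableSpace X] [StandardBorelSpace X]
    (μ : Measure X) [IsProbabilityMeasure μ] (T : X → X) (hT : MeasurePreserving T μ μ) :
    List.TFAE
      [Dense ((Submodule.span ℂ {f : Lp ℂ 2 μ | ∃ c : ℂ, ∀ᵐ x ∂μ, f (T x) = c * f x} :
          Submodule ℂ (Lp ℂ 2 μ)) : Set (Lp ℂ 2 μ)),
        ∀ ρ : X → X → ℝ, IsSemimetric ρ → Admissible μ ρ →
          Integrable (uncurry ρ) (μ.prod μ) → HasBoundedAverageEntropies μ T ρ,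
        ∃ ρ : X → X → ℝ, IsMetricFun ρ ∧ Admissible μ ρ ∧
          Integrable (uncurry ρ) (μ.prod μ) ∧ HasBoundedAverageEntropies μ T ρ] := by
  rw [span_eigenfunctions_eq_iSup_eigenspace hT,
    ← almostPeriodicVectors_eq_top_iff_dense_iSup_eigenspace]
  tfae_have 1 → 2
  | hU, ρ, hρ, hadm, hint =>
    hasBoundedAverageEntropies_of_almostPeriodicVectors_koopman_eq_top hT hU hρ hadm hint
  tfae_have 2 → 3
  | h => by
    obtain ⟨ρ, hρ, hadm, hint⟩ := exists_isMetricFun_admissible_integrable μ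
    exact ⟨ρ, hρ, hadm, hint, h ρ hρ.1 hadm hint⟩
  tfae_have 3 → 1
  | ⟨ρ, hρ, hadm, _, hent⟩ =>
    almostPeriodicVectors_koopman_eq_top_of_hasBoundedAverageEntropies hT hρ hadm hent
  tfae_finish

/-- discreteness criterion for the spectrum: for an invertible
measure-preserving transformation `T` of a standard probability space `(X, μ)`, the
following are equivalent: (1) `T` has purely discrete spectrum (the eigenfunctions of the
Koopman operator `f ↦ f ∘ T` span a dense subspace of `L²(X, μ)`); (2) for every
admissible summable semimetric `ρ` and every `ε > 0` the `ε`-entropies of the averages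
`ρ_n^{av}(x,y) = n⁻¹ ∑_{k=0}^{n-1} ρ(T^k x, T^k y)` are uniformly bounded in `n`;
(3) the same holds for some admissible summable metric `ρ`. -/
theorem statement17 {X : Type*} [MeasurableSpace X] [StandardBorelSpace X]
    (μ : Measure X) [IsProbabilityMeasure μ] (T : X → X)
    (hT : MeasurePreserving T μ μ) (hbij : Function.Bijective T) :
    List.TFAE
      [ Dense ((Submodule.span ℂ
          {f : Lp ℂ 2 μ | ∃ c : ℂ, ∀ᵐ x ∂μ, f (T x) = c * f x} :
            Submodule ℂ (Lp ℂ 2 μ)) : Set (Lp ℂ 2 μ)),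
        ∀ ρ : X → X → ℝ, IsSemimetric ρ → Admissible μ ρ →
          Integrable (Function.uncurry ρ) (μ.prod μ) →
          ∀ ε : ℝ, 0 < ε → ∃ C : ℝ≥0∞, C ≠ ∞ ∧ ∀ n : ℕ, 1 ≤ n →
            epsEntropy μ
              (fun x y => (∑ k ∈ Finset.range n, ρ (T^[k] x) (T^[k] y)) / n) ε ≤ C,
        ∃ ρ : X → X → ℝ, IsMetricFun ρ ∧ Admissible μ ρ ∧
          Integrable (Function.uncurry ρ) (μ.prod μ) ∧
          ∀ ε : ℝ, 0 < ε → ∃ C : ℝ≥0∞, C ≠ ∞ ∧ ∀ n : ℕ, 1 ≤ n →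
            epsEntropy μ
              (fun x y => (∑ k ∈ Finset.range n, ρ (T^[k] x) (T^[k] y)) / n) ε ≤ C ] :=
  statement17_general μ T hT
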